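/- arXiv:1908.09420 — 4 statements merged into one kernel-verified Lean document; each statement's English description precedes it below -/
import Mathlib

section
/- Let N be an odd perfect number with at least three distinct prime divisors, and let a, b, c denote respectively its third largest, second largest, and largest prime divisors. If p⁴ divides N for some prime p ∈ {a, b, c}, then abc < 2^(7/20) · 3^(13/60) · N^(17/30). -/
/-!
Let `e p` be the exponent of `p` in `N` and `σ(p ^ k) = 1 + p + ⋯ + p ^ k`. Since
`∏ σ(p ^ e p) = 2 * N` with `N` odd, at most one exponent is odd, and `σ(p ^ e p) ∣ N` if `e p` is
even. For any three prime divisors `a < b < c`, one of which has exponent at least `4`, we show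
`(abc) ^ 16 ≤ 2 ^ 10 * N ^ 9`, that is, `abc ≤ 2 ^ (5 / 8) * N ^ (9 / 16)`.

The hard case is `e c = 1`, `e b = 2`, `e a ≥ 4`. Then `t = (c + 1) / 2` divides `N`, and `c`
divides `σ(q ^ e q)` for some prime `q ≠ c`; comparing the power of `q` in `c + 1` with the cofactor
of `c` gives `c ^ 3 ≤ 6 * N`. Suppose `q ∈ {a, b}` and `q ∤ c + 1`, and let `p` be the other of
`a, b`. Either `p ^ e p ∣ t`, and then `c` is so large compared with `p ^ e p` that `σ(p ^ e p)`
contributes a factor of `N` nearly prime to `c * p ^ e p * q ^ e q`, or `p * t` is at most the least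
common multiple of `p ^ e p` and `t`, which is prime to `c * q ^ e q`. Each case yields monomial
inequalities in `a, b, c, N`, and a suitable product of their powers is the claim.
-/

open Finset

section GeomSum

lemma mul_geom_sum_le {m p : ℕ} (h : m < p) (k : ℕ) :
    m * ∑ i ∈ range (k + 1), p ^ i ≤ (m + 1) * p ^ k := by
  induction k with
  | zero => simp
  | succ k ih =>
    calc m * ∑ i ∈ range (k + 2), p ^ i
        = m * ∑ i ∈ range (k + 1), p ^ i + m * p ^ (k + 1) := by rw [sum_range_succ, mul_add]
      _ ≤ (m + 1) * p ^ k + m * p ^ (k + 1) := by gcongr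
      _ ≤ p * p ^ k + m * p ^ (k + 1) := by gcongr; exact h
      _ = (m + 1) * p ^ (k + 1) := by ring

lemma pow_le_geom_sum (p k : ℕ) : p ^ k ≤ ∑ i ∈ range (k + 1), p ^ i :=
  single_le_sum (f := (p ^ ·)) (fun _ _ => Nat.zero_le _) (self_mem_range_succ k)

lemma geom_sum_succ_pos (p k : ℕ) : 0 < ∑ i ∈ range (k + 1), p ^ i := by
  simp [geom_sum_succ]

lemma odd_geom_sum_iff {p : ℕ} (hp : Odd p) (k : ℕ) :
    Odd (∑ i ∈ range (k + 1), p ^ i) ↔ Even k := by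
  rw [odd_sum_iff_odd_card_odd, filter_true_of_mem (fun i _ => hp.pow), card_range,
    Nat.odd_add_one, Nat.not_odd_iff_even]

lemma coprime_geom_sum (p k : ℕ) : p.Coprime (∑ i ∈ range (k + 1), p ^ i) := by
  simp [geom_sum_succ]

lemma mul_geom_sum_mul_geom_sum_le {p q : ℕ} (hp : Odd p) (hq : Odd q) (hp3 : 3 ≤ p)
    (hq3 : 3 ≤ q) (hpq : p ≠ q) (k l : ℕ) :
    8 * ((∑ i ∈ range (k + 1), p ^ i) * ∑ i ∈ range (l + 1), q ^ i) ≤ 15 * (p ^ k * q ^ l) := by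
  wlog h : p < q generalizing p q k l
  · simpa only [mul_comm] using this hq hp hq3 hp3 hpq.symm l k (by lia)
  have hq5 : 4 < q := by grind
  calc 8 * ((∑ i ∈ range (k + 1), p ^ i) * ∑ i ∈ range (l + 1), q ^ i)
      = (2 * ∑ i ∈ range (k + 1), p ^ i) * (4 * ∑ i ∈ range (l + 1), q ^ i) := by ring
    _ ≤ (3 * p ^ k) * (5 * q ^ l) :=
        Nat.mul_le_mul (mul_geom_sum_le hp3 k) (mul_geom_sum_le hq5 l)
    _ = 15 * (p ^ k * q ^ l) := by ring

/- Writing `S` and `T` for the two sums, we would have `2 * p ^ k * q ^ l ≤ S * (T + 1)`, while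
`S * T ≤ 15 / 8 * (p ^ k * q ^ l)`. -/
lemma not_pow_dvd_geom_sum {p q c k l : ℕ} (hp : Odd p) (hq : Odd q) (hp3 : 3 ≤ p) (hq3 : 3 ≤ q)
    (hpq : p ≠ q) (hql : 12 < q ^ l) (hcq : c ∣ ∑ i ∈ range (l + 1), q ^ i)
    (hpc : 2 * p ^ k ≤ c + 1) : ¬ q ^ l ∣ ∑ i ∈ range (k + 1), p ^ i := by
  intro hdvd
  set S := ∑ i ∈ range (k + 1), p ^ i
  set T := ∑ i ∈ range (l + 1), q ^ i
  have hqS : q ^ l ≤ S := Nat.le_of_dvd (geom_sum_succ_pos p k) hdvd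
  have hcT : c ≤ T := Nat.le_of_dvd (geom_sum_succ_pos q l) hcq
  have hST : 8 * (S * T) ≤ 15 * (p ^ k * q ^ l) :=
    mul_geom_sum_mul_geom_sum_le hp hq hp3 hq3 hpq k l
  have hS : 2 * S ≤ 3 * p ^ k := mul_geom_sum_le hp3 k
  have hle : p ^ k * (16 * q ^ l) ≤ p ^ k * (15 * q ^ l + 12) := by
    calc p ^ k * (16 * q ^ l) = 8 * (q ^ l * (2 * p ^ k)) := by ring
      _ ≤ 8 * (S * (T + 1)) := by gcongr; lia
      _ = 8 * (S * T) + 4 * (2 * S) := by ring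
      _ ≤ 15 * (p ^ k * q ^ l) + 4 * (3 * p ^ k) := by gcongr
      _ = p ^ k * (15 * q ^ l + 12) := by ring
  have := Nat.le_of_mul_le_mul_left hle (by positivity)
  lia

/- Modulo `p ^ j` we have `c ≡ -1`, so the cofactor `d` is minus the truncated geometric sum. -/
lemma pow_dvd_cofactor_add_geom_sum {p c d j n : ℕ} (hjn : j ≤ n) (hj : p ^ j ∣ c + 1)
    (hd : ∑ i ∈ range n, p ^ i = c * d) : p ^ j ∣ d + ∑ i ∈ range j, p ^ i := by
  obtain ⟨m, rfl⟩ := Nat.exists_eq_add_of_le hjn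
  have hsplit : (c + 1) * d =
      (d + ∑ i ∈ range j, p ^ i) + p ^ j * ∑ i ∈ range m, p ^ i := by
    rw [add_one_mul, ← hd, sum_range_add, mul_sum]
    simp only [pow_add]
    ring
  exact (Nat.dvd_add_left (dvd_mul_right _ _)).1 (hsplit ▸ hj.mul_right d)

lemma mul_pow_le_of_dvd_geom_sum {p c j k : ℕ} (hp : 3 ≤ p) (hjk : j ≤ k) (hj : p ^ j ∣ c + 1)
    (hc : c ∣ ∑ i ∈ range (k + 1), p ^ i) : c * p ^ j ≤ 3 * p ^ k := by
  obtain ⟨d, hd⟩ := hc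
  have hd_pos : 0 < d := Nat.pos_of_mul_pos_left (hd ▸ geom_sum_succ_pos p k)
  have hle : p ^ j ≤ d + ∑ i ∈ range j, p ^ i :=
    Nat.le_of_dvd (by lia) (pow_dvd_cofactor_add_geom_sum (by lia) hj hd)
  have hhalf : 2 * ∑ i ∈ range j, p ^ i ≤ p ^ j := by
    calc 2 * ∑ i ∈ range j, p ^ i ≤ (p - 1) * ∑ i ∈ range j, p ^ i := by gcongr; lia
      _ = p ^ j - 1 := by rw [mul_comm, geom_sum_mul_of_one_le (by lia)]
      _ ≤ p ^ j := Nat.sub_le _ _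
  calc c * p ^ j ≤ c * (2 * d) := by gcongr; lia
    _ = 2 * ∑ i ∈ range (k + 1), p ^ i := by rw [hd]; ring
    _ ≤ 3 * p ^ k := mul_geom_sum_le hp k

lemma le_cofactor_add_one_of_dvd_add_one {p c d k : ℕ} (hp : p ∣ c + 1)
    (hd : ∑ i ∈ range (k + 1), p ^ i = c * d) : p ≤ d + 1 := by
  have := pow_dvd_cofactor_add_geom_sum (j := 1) (by lia) (by simpa using hp) hd
  exact Nat.le_of_dvd d.succ_pos (by simpa using this)

lemma four_mul_le_of_dvd_geom_sum {p c k : ℕ} (hp : 3 ≤ p) (hpc : p ∣ c + 1)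
    (hc : c ∣ ∑ i ∈ range (k + 2), p ^ i) : 4 * c ≤ 9 * p ^ k := by
  obtain ⟨d, hd⟩ := hc
  have hpd : p - 1 ≤ d := by
    have := le_cofactor_add_one_of_dvd_add_one hpc hd
    lia
  have hsq : 4 * p ^ 2 ≤ 9 * (p - 1) ^ 2 := by
    have : 2 * p ≤ 3 * (p - 1) := by lia
    nlinarith
  suffices p ^ 2 * (4 * c) ≤ p ^ 2 * (9 * p ^ k) from Nat.le_of_mul_le_mul_left this (by positivity)
  calc p ^ 2 * (4 * c) = c * (4 * p ^ 2) := by ring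
    _ ≤ c * (9 * ((p - 1) * (p - 1))) := by rw [← sq]; gcongr
    _ ≤ c * (9 * (d * (p - 1))) := by gcongr
    _ = 9 * ((∑ i ∈ range (k + 2), p ^ i) * (p - 1)) := by rw [hd]; ring
    _ ≤ 9 * p ^ (k + 2) := by rw [geom_sum_mul_of_one_le (by lia)]; gcongr; exact Nat.sub_le _ _
    _ = p ^ 2 * (9 * p ^ k) := by ring

lemma not_dvd_add_one_of_dvd_geom_sum_three {p c : ℕ} (hp : 4 < p) (hpc : p < c)
    (hc : c ∣ ∑ i ∈ range 3, p ^ i) : ¬ p ∣ c + 1 := by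
  intro hdvd
  obtain ⟨d, hd⟩ := hc
  have hpd : p ≤ d + 1 := le_cofactor_add_one_of_dvd_add_one hdvd hd
  have hpc' : 2 * p ≤ c + 1 := by
    obtain ⟨m, hm⟩ := hdvd
    have : 2 ≤ m := by
      by_contra! hm2
      have : p * m ≤ p * 1 := by gcongr; lia
      lia
    calc 2 * p ≤ m * p := by gcongr
      _ = c + 1 := by rw [hm, mul_comm]
  simp only [sum_range_succ, range_zero, sum_empty, pow_zero, pow_one] at hd
  nlinarith

end GeomSum

section Divisibility

lemma prime_mul_le_lcm_pow {p k t : ℕ} (hp : p.Prime) (h : ¬ p ^ k ∣ t) :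
    p * t ≤ Nat.lcm (p ^ k) t := by
  obtain ⟨r, hrk, hr⟩ := (Nat.dvd_prime_pow hp).1 (Nat.gcd_dvd_left (p ^ k) t)
  have hlt : r < k := hrk.lt_of_ne fun hrk => h (by rw [← hrk, ← hr]; exact Nat.gcd_dvd_right _ _)
  suffices p ^ r * (p * t) ≤ p ^ r * Nat.lcm (p ^ k) t from
    Nat.le_of_mul_le_mul_left this (pow_pos hp.pos r)
  calc p ^ r * (p * t) = p ^ (r + 1) * t := by ring
    _ ≤ p ^ k * t := by gcongr; exacts [hp.one_le, hlt]
    _ = p ^ r * Nat.lcm (p ^ k) t := by rw [← hr, Nat.gcd_mul_lcm]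

lemma mul_prime_mul_le_of_not_pow_dvd {N x p k t : ℕ} (hN : 0 < N) (hp : p.Prime)
    (hxp : x.Coprime p) (hxt : x.Coprime t) (hx : x ∣ N) (hpk : p ^ k ∣ N) (ht : t ∣ N)
    (h : ¬ p ^ k ∣ t) : x * (p * t) ≤ N := by
  have hcop : x.Coprime (Nat.lcm (p ^ k) t) :=
    ((hxp.pow_right k).mul_right hxt).coprime_dvd_right (Nat.lcm_dvd_mul _ _)
  calc x * (p * t) ≤ x * Nat.lcm (p ^ k) t := by gcongr; exact prime_mul_le_lcm_pow hp h
    _ ≤ N := Nat.le_of_dvd hN (hcop.mul_dvd_of_dvd_of_dvd hx (Nat.lcm_dvd hpk ht))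

lemma coprime_of_mem_primeFactors {N p q : ℕ} (hp : p ∈ N.primeFactors) (hq : q ∈ N.primeFactors)
    (hpq : p ≠ q) : p.Coprime q :=
  (Nat.coprime_primes (Nat.prime_of_mem_primeFactors hp) (Nat.prime_of_mem_primeFactors hq)).2 hpq

lemma factorization_pos_of_mem_primeFactors {N p : ℕ} (hp : p ∈ N.primeFactors) :
    0 < N.factorization p :=
  (Nat.prime_of_mem_primeFactors hp).factorization_pos_of_dvd (Nat.mem_primeFactors.1 hp).2.2
    (Nat.dvd_of_mem_primeFactors hp)

lemma pow_dvd_of_le_factorization {N p k : ℕ} (hk : k ≤ N.factorization p) : p ^ k ∣ N :=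
  (pow_dvd_pow p hk).trans (Nat.ordProj_dvd N p)

lemma pow_mul_pow_mul_pow_dvd {N a b c i j k : ℕ} (ha : a ∈ N.primeFactors)
    (hb : b ∈ N.primeFactors) (hc : c ∈ N.primeFactors) (hab : a < b) (hbc : b < c)
    (hi : i ≤ N.factorization a) (hj : j ≤ N.factorization b) (hk : k ≤ N.factorization c) :
    a ^ i * b ^ j * c ^ k ∣ N := by
  have cab := coprime_of_mem_primeFactors ha hb hab.ne
  have cac := coprime_of_mem_primeFactors ha hc (hab.trans hbc).ne
  have cbc := coprime_of_mem_primeFactors hb hc hbc.ne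
  exact ((cac.pow i k).mul_left (cbc.pow j k)).mul_dvd_of_dvd_of_dvd
    ((cab.pow i j).mul_dvd_of_dvd_of_dvd (pow_dvd_of_le_factorization hi)
      (pow_dvd_of_le_factorization hj)) (pow_dvd_of_le_factorization hk)

lemma pow_mul_pow_mul_pow_le {N a b c i j k : ℕ} (ha : a ∈ N.primeFactors)
    (hb : b ∈ N.primeFactors) (hc : c ∈ N.primeFactors) (hab : a < b) (hbc : b < c)
    (hi : i ≤ N.factorization a) (hj : j ≤ N.factorization b) (hk : k ≤ N.factorization c) :
    a ^ i * b ^ j * c ^ k ≤ N :=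
  Nat.le_of_dvd (Nat.pos_of_ne_zero (Nat.mem_primeFactors.1 ha).2.2)
    (pow_mul_pow_mul_pow_dvd ha hb hc hab hbc hi hj hk)

lemma pow_four_mul_le {N a b c k : ℕ} (ha : a ∈ N.primeFactors) (hb : b ∈ N.primeFactors)
    (hc : c ∈ N.primeFactors) (hab : a < b) (hbc : b < c)
    (h4 : 4 ≤ N.factorization a ∨ 4 ≤ N.factorization b) (hk : k ≤ N.factorization c) :
    a ^ 4 * b * c ^ k ≤ N := by
  have hfa := factorization_pos_of_mem_primeFactors ha
  have hfb := factorization_pos_of_mem_primeFactors hb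
  rcases h4 with ha4 | hb4
  · simpa using pow_mul_pow_mul_pow_le ha hb hc hab hbc ha4 hfb hk
  · calc a ^ 4 * b * c ^ k = a * b * c ^ k * a ^ 3 := by ring
      _ ≤ a * b * c ^ k * b ^ 3 := by gcongr
      _ = a ^ 1 * b ^ 4 * c ^ k := by ring
      _ ≤ N := pow_mul_pow_mul_pow_le ha hb hc hab hbc hfa hb4 hk

end Divisibility

/-- `N` is an odd perfect number; bundles the standing assumption on `N`. -/
structure OddPerfect (N : ℕ) : Prop where
  odd : Odd N
  perfect : N.Perfect

namespace OddPerfect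

variable {N p q a b c : ℕ}

lemma pos (h : OddPerfect N) : 0 < N :=
  h.odd.pos

lemma odd_of_mem_primeFactors (h : OddPerfect N) (hp : p ∈ N.primeFactors) : Odd p :=
  h.odd.of_dvd_nat (Nat.dvd_of_mem_primeFactors hp)

lemma three_le_of_mem_primeFactors (h : OddPerfect N) (hp : p ∈ N.primeFactors) : 3 ≤ p := by
  have := h.odd_of_mem_primeFactors hp
  have := (Nat.prime_of_mem_primeFactors hp).two_le
  grind

lemma prod_geom_sum (h : OddPerfect N) :
    ∏ p ∈ N.primeFactors, ∑ i ∈ range (N.factorization p + 1), p ^ i = 2 * N := by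
  rw [← (Nat.perfect_iff_sum_divisors_eq_two_mul h.pos).1 h.perfect, Nat.sum_divisors h.pos.ne']

lemma geom_sum_dvd (h : OddPerfect N) (hp : p ∈ N.primeFactors) :
    ∑ i ∈ range (N.factorization p + 1), p ^ i ∣ 2 * N := by
  rw [← h.prod_geom_sum]
  exact dvd_prod_of_mem (fun p => ∑ i ∈ range (N.factorization p + 1), p ^ i) hp

lemma geom_sum_dvd_of_even (h : OddPerfect N) (hp : p ∈ N.primeFactors)
    (he : Even (N.factorization p)) : ∑ i ∈ range (N.factorization p + 1), p ^ i ∣ N :=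
  Nat.Coprime.dvd_of_dvd_mul_left
    (Nat.coprime_two_right.2 ((odd_geom_sum_iff (h.odd_of_mem_primeFactors hp) _).2 he))
    (h.geom_sum_dvd hp)

lemma even_factorization_of_odd_factorization (h : OddPerfect N) (hp : p ∈ N.primeFactors)
    (hq : q ∈ N.primeFactors) (hpq : p ≠ q) (hqo : Odd (N.factorization q)) :
    Even (N.factorization p) := by
  by_contra hpo
  have two_dvd {r : ℕ} (hr : r ∈ N.primeFactors) (hro : ¬ Even (N.factorization r)) :
      2 ∣ ∑ i ∈ range (N.factorization r + 1), r ^ i := by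
    rwa [← odd_geom_sum_iff (h.odd_of_mem_primeFactors hr), Nat.not_odd_iff_even,
      even_iff_two_dvd] at hro
  have hpair := prod_dvd_prod_of_subset {p, q} N.primeFactors
    (fun r => ∑ i ∈ range (N.factorization r + 1), r ^ i) (by simp [insert_subset_iff, hp, hq])
  rw [prod_pair hpq, h.prod_geom_sum] at hpair
  have hfour : 2 * 2 ∣ 2 * N :=
    (mul_dvd_mul (two_dvd hp hpo) (two_dvd hq (Nat.not_even_iff_odd.2 hqo))).trans hpair
  exact h.odd.not_two_dvd_nat (Nat.dvd_of_mul_dvd_mul_left two_pos hfour)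

lemma exists_dvd_geom_sum (h : OddPerfect N) (hc : c ∈ N.primeFactors) :
    ∃ q ∈ N.primeFactors, q ≠ c ∧ c ∣ ∑ i ∈ range (N.factorization q + 1), q ^ i := by
  have hcN : c ∣ 2 * N := (Nat.dvd_of_mem_primeFactors hc).mul_left 2
  have hcp := Nat.prime_of_mem_primeFactors hc
  rw [← h.prod_geom_sum] at hcN
  obtain ⟨q, hq, hcq⟩ := (hcp.prime.dvd_finsetProd_iff _).1 hcN
  refine ⟨q, hq, ?_, hcq⟩
  rintro rfl
  exact hcp.coprime_iff_not_dvd.1 (coprime_geom_sum q _) hcq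

lemma pow_four_le_of_even_factorization (h : OddPerfect N) (hp : p ∈ N.primeFactors)
    (he : Even (N.factorization p)) : p ^ 4 ≤ N := by
  set e := N.factorization p
  have he2 : 2 ≤ e := by
    have := factorization_pos_of_mem_primeFactors hp
    grind
  have hdvd : p ^ e * ∑ i ∈ range (e + 1), p ^ i ∣ N :=
    ((coprime_geom_sum p e).pow_left e).mul_dvd_of_dvd_of_dvd (Nat.ordProj_dvd N p)
      (h.geom_sum_dvd_of_even hp he)
  have hp1 : 1 ≤ p := Nat.pos_of_mem_primeFactors hp
  calc p ^ 4 = p ^ 2 * p ^ 2 := by ring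
    _ ≤ p ^ e * p ^ e := by gcongr
    _ ≤ p ^ e * ∑ i ∈ range (e + 1), p ^ i := by gcongr; exact pow_le_geom_sum p e
    _ ≤ N := Nat.le_of_dvd h.pos hdvd

lemma exists_two_mul_eq_add_one (h : OddPerfect N) (hc : c ∈ N.primeFactors)
    (hc1 : N.factorization c = 1) : ∃ t, c + 1 = 2 * t ∧ t ∣ N ∧ c.Coprime t := by
  obtain ⟨t, ht⟩ := ((h.odd_of_mem_primeFactors hc).add_odd odd_one).two_dvd
  have hsum : c + 1 ∣ 2 * N := by simpa [hc1, geom_sum_succ] using h.geom_sum_dvd hc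
  have hcop : c.Coprime (c + 1) := by simp
  exact ⟨t, ht, Nat.dvd_of_mul_dvd_mul_left two_pos (ht ▸ hsum),
    hcop.coprime_dvd_right (ht ▸ dvd_mul_left t 2)⟩

lemma cube_le_six_mul (h : OddPerfect N) (hc : c ∈ N.primeFactors) (hc1 : N.factorization c = 1) :
    c ^ 3 ≤ 6 * N := by
  obtain ⟨t, ht, htN, hct⟩ := h.exists_two_mul_eq_add_one hc hc1
  obtain ⟨q, hq, hqc, hcq⟩ := h.exists_dvd_geom_sum hc
  have hqp := Nat.prime_of_mem_primeFactors hq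
  obtain ⟨j, s, hqs, rfl⟩ := Nat.exists_eq_pow_mul_and_not_dvd (n := t) (by lia) q hqp.ne_one
  have hj : j ≤ N.factorization q :=
    (hqp.pow_dvd_iff_le_factorization h.pos.ne').1 ((dvd_mul_right _ _).trans htN)
  have hcqs : c * q ^ N.factorization q * s ∣ N := by
    have ccq := (coprime_of_mem_primeFactors hc hq hqc.symm).pow_right (N.factorization q)
    have ccs := hct.coprime_dvd_right (dvd_mul_left s _)
    have cqs := (hqp.coprime_iff_not_dvd.2 hqs).pow_left (N.factorization q)
    exact (ccs.mul_left cqs).mul_dvd_of_dvd_of_dvd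
      (ccq.mul_dvd_of_dvd_of_dvd (Nat.dvd_of_mem_primeFactors hc) (Nat.ordProj_dvd N q))
      ((dvd_mul_left s _).trans htN)
  have hle : c * q ^ j ≤ 3 * q ^ N.factorization q :=
    mul_pow_le_of_dvd_geom_sum (h.three_le_of_mem_primeFactors hq) hj
      (ht ▸ (dvd_mul_right _ s).mul_left 2) hcq
  calc c ^ 3 ≤ c ^ 2 * (c + 1) := by rw [pow_succ]; gcongr; lia
    _ = 2 * c * s * (c * q ^ j) := by rw [ht]; ring
    _ ≤ 2 * c * s * (3 * q ^ N.factorization q) := by gcongr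
    _ = 6 * (c * q ^ N.factorization q * s) := by ring
    _ ≤ 6 * N := by gcongr; exact Nat.le_of_dvd h.pos hcqs

lemma sq_mul_pow_le_of_not_dvd_add_one (h : OddPerfect N) (hq : q ∈ N.primeFactors)
    (hc : c ∈ N.primeFactors) (hqc : q ≠ c) (hc1 : N.factorization c = 1) (hqc' : ¬ q ∣ c + 1) :
    c ^ 2 * q ^ N.factorization q ≤ 2 * N := by
  obtain ⟨t, ht, htN, hct⟩ := h.exists_two_mul_eq_add_one hc hc1
  have hqt : q.Coprime t :=
    (Nat.prime_of_mem_primeFactors hq).coprime_iff_not_dvd.2 fun hqt =>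
      hqc' (ht ▸ hqt.mul_left 2)
  have ccq := (coprime_of_mem_primeFactors hc hq hqc.symm).pow_right (N.factorization q)
  have hdvd : c * q ^ N.factorization q * t ∣ N :=
    (hct.mul_left (hqt.pow_left _)).mul_dvd_of_dvd_of_dvd
      (ccq.mul_dvd_of_dvd_of_dvd (Nat.dvd_of_mem_primeFactors hc) (Nat.ordProj_dvd N q)) htN
  calc c ^ 2 * q ^ N.factorization q = c * q ^ N.factorization q * c := by ring
    _ ≤ c * q ^ N.factorization q * (2 * t) := by gcongr; lia
    _ = 2 * (c * q ^ N.factorization q * t) := by ring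
    _ ≤ 2 * N := by gcongr; exact Nat.le_of_dvd h.pos hdvd

lemma mul_mul_pow_le_of_two_mul_pow_le (h : OddPerfect N) (hp : p ∈ N.primeFactors)
    (hq : q ∈ N.primeFactors) (hc : c ∈ N.primeFactors) (hpq : p ≠ q) (hpc : p ≠ c) (hqc : q ≠ c)
    (hc1 : N.factorization c = 1) (hql : 12 < q ^ N.factorization q)
    (hcq : c ∣ ∑ i ∈ range (N.factorization q + 1), q ^ i)
    (hpkc : 2 * p ^ N.factorization p ≤ c + 1) : c * q * p ^ (2 * N.factorization p) ≤ N := by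
  have hp3 := h.three_le_of_mem_primeFactors hp
  have cpq := coprime_of_mem_primeFactors hp hq hpq
  have ccp := coprime_of_mem_primeFactors hc hp hpc.symm
  have ccq := coprime_of_mem_primeFactors hc hq hqc.symm
  have hSN := h.geom_sum_dvd_of_even hp
    (h.even_factorization_of_odd_factorization hp hc hpc (by simp [hc1]))
  have hpN := Nat.ordProj_dvd N p
  have hpk : p ≤ p ^ N.factorization p :=
    Nat.le_self_pow (factorization_pos_of_mem_primeFactors hp).ne' p
  set k := N.factorization p
  have hcS : c.Coprime (∑ i ∈ range (k + 1), p ^ i) := by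
    refine (Nat.prime_of_mem_primeFactors hc).coprime_iff_not_dvd.2
      (Nat.not_dvd_of_pos_of_lt (geom_sum_succ_pos p k) ?_)
    have := mul_geom_sum_le hp3 k
    lia
  have hqS : ¬ q ^ N.factorization q ∣ ∑ i ∈ range (k + 1), p ^ i :=
    not_pow_dvd_geom_sum (h.odd_of_mem_primeFactors hp) (h.odd_of_mem_primeFactors hq) hp3
      (h.three_le_of_mem_primeFactors hq) hpq hql hcq hpkc
  calc c * q * p ^ (2 * k) = c * p ^ k * (q * p ^ k) := by ring
    _ ≤ c * p ^ k * (q * ∑ i ∈ range (k + 1), p ^ i) := by gcongr; exact pow_le_geom_sum p k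
    _ ≤ N := mul_prime_mul_le_of_not_pow_dvd h.pos (Nat.prime_of_mem_primeFactors hq)
        (ccq.mul_left (cpq.pow_left k)) (hcS.mul_left ((coprime_geom_sum p k).pow_left k))
        ((ccp.pow_right k).mul_dvd_of_dvd_of_dvd (Nat.dvd_of_mem_primeFactors hc) hpN)
        (Nat.ordProj_dvd N q) hSN hqS

lemma sq_mul_pow_mul_le_of_not_dvd (h : OddPerfect N) (hp : p ∈ N.primeFactors)
    (hq : q ∈ N.primeFactors) (hc : c ∈ N.primeFactors) (hpq : p ≠ q) (hpc : p ≠ c) (hqc : q ≠ c)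
    (hc1 : N.factorization c = 1) (hqc' : ¬ q ∣ c + 1)
    (hpkc : ¬ 2 * p ^ N.factorization p ∣ c + 1) :
    c ^ 2 * q ^ N.factorization q * p ≤ 2 * N := by
  obtain ⟨t, ht, htN, hct⟩ := h.exists_two_mul_eq_add_one hc hc1
  have hpt : ¬ p ^ N.factorization p ∣ t := fun hpt => hpkc (ht ▸ mul_dvd_mul_left 2 hpt)
  have cqp := coprime_of_mem_primeFactors hq hp hpq.symm
  have ccp := coprime_of_mem_primeFactors hc hp hpc.symm
  have ccq := coprime_of_mem_primeFactors hc hq hqc.symm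
  have hqN := Nat.ordProj_dvd N q
  have hqt : q.Coprime t :=
    (Nat.prime_of_mem_primeFactors hq).coprime_iff_not_dvd.2 fun hqt =>
      hqc' (ht ▸ hqt.mul_left 2)
  set l := N.factorization q
  have hle : c * q ^ l * (p * t) ≤ N :=
    mul_prime_mul_le_of_not_pow_dvd h.pos (Nat.prime_of_mem_primeFactors hp)
      (ccp.mul_left (cqp.pow_left l)) (hct.mul_left (hqt.pow_left l))
      ((ccq.pow_right l).mul_dvd_of_dvd_of_dvd (Nat.dvd_of_mem_primeFactors hc) hqN)
      (Nat.ordProj_dvd N p) htN hpt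
  calc c ^ 2 * q ^ l * p = c * q ^ l * (p * c) := by ring
    _ ≤ c * q ^ l * (p * (2 * t)) := by gcongr; lia
    _ = 2 * (c * q ^ l * (p * t)) := by ring
    _ ≤ 2 * N := by gcongr

lemma mul_mul_pow_le_or_sq_mul_pow_mul_le (h : OddPerfect N) (hp : p ∈ N.primeFactors)
    (hq : q ∈ N.primeFactors) (hc : c ∈ N.primeFactors) (hpq : p ≠ q) (hpc : p ≠ c) (hqc : q ≠ c)
    (hc1 : N.factorization c = 1) (hql : 12 < q ^ N.factorization q)
    (hcq : c ∣ ∑ i ∈ range (N.factorization q + 1), q ^ i) (hqc' : ¬ q ∣ c + 1) :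
    c * q * p ^ (2 * N.factorization p) ≤ N ∨ c ^ 2 * q ^ N.factorization q * p ≤ 2 * N := by
  by_cases hpkc : 2 * p ^ N.factorization p ∣ c + 1
  · exact .inl (h.mul_mul_pow_le_of_two_mul_pow_le hp hq hc hpq hpc hqc hc1 hql hcq
      (Nat.le_of_dvd c.succ_pos hpkc))
  · exact .inr (h.sq_mul_pow_mul_le_of_not_dvd hp hq hc hpq hpc hqc hc1 hqc' hpkc)

end OddPerfect

section Exponents

lemma pow_sixteen_le_of_sq_le {x N : ℕ} (hN : 0 < N) (h : x ^ 2 ≤ 2 * N) :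
    x ^ 16 ≤ 2 ^ 10 * N ^ 9 :=
  calc x ^ 16 = (x ^ 2) ^ 8 := by ring
    _ ≤ (2 * N) ^ 8 := by gcongr
    _ = 2 ^ 8 * N ^ 8 := by ring
    _ ≤ 2 ^ 10 * N ^ 9 := by gcongr <;> lia

lemma pow_sixteen_le_of_pow_eighteen_le {x N : ℕ} (hN : 0 < N) (h : x ^ 18 ≤ 2 ^ 11 * N ^ 10) :
    x ^ 16 ≤ 2 ^ 10 * N ^ 9 := by
  refine le_of_pow_le_pow_left₀ (n := 9) (by lia) (by positivity) ?_
  calc (x ^ 16) ^ 9 = (x ^ 18) ^ 8 := by ring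
    _ ≤ (2 ^ 11 * N ^ 10) ^ 8 := by gcongr
    _ = 2 ^ 88 * N ^ 80 := by ring
    _ ≤ 2 ^ 90 * N ^ 81 := by gcongr <;> lia
    _ = (2 ^ 10 * N ^ 9) ^ 9 := by ring

end Exponents

namespace OddPerfect

variable {N a b c : ℕ}

lemma pow_sixteen_le_of_two_le_factorization (h : OddPerfect N) (ha : a ∈ N.primeFactors)
    (hb : b ∈ N.primeFactors) (hc : c ∈ N.primeFactors) (hab : a < b) (hbc : b < c)
    (h4 : 4 ≤ N.factorization a ∨ 4 ≤ N.factorization b ∨ 4 ≤ N.factorization c)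
    (hc2 : 2 ≤ N.factorization c) : (a * b * c) ^ 16 ≤ 2 ^ 10 * N ^ 9 := by
  have hN := h.pos
  by_cases hc4 : 4 ≤ N.factorization c
  · refine pow_sixteen_le_of_sq_le hN ?_
    calc (a * b * c) ^ 2 = a ^ 1 * b ^ 1 * (a * b * c ^ 2) := by ring
      _ ≤ a ^ 1 * b ^ 1 * (c * c * c ^ 2) := by gcongr; exact (hab.trans hbc).le
      _ = a ^ 1 * b ^ 1 * c ^ 4 := by ring
      _ ≤ N := pow_mul_pow_mul_pow_le ha hb hc hab hbc (factorization_pos_of_mem_primeFactors ha)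
          (factorization_pos_of_mem_primeFactors hb) hc4
      _ ≤ 2 * N := by lia
  have h4' : 4 ≤ N.factorization a ∨ 4 ≤ N.factorization b := by tauto
  obtain hc3 | hc2 : N.factorization c = 3 ∨ N.factorization c = 2 := by lia
  · refine pow_sixteen_le_of_sq_le hN ?_
    have ha1 : 1 ≤ a := Nat.pos_of_mem_primeFactors ha
    calc (a * b * c) ^ 2 = a ^ 2 * b * c ^ 2 * b := by ring
      _ ≤ a ^ 4 * b * c ^ 2 * c := by gcongr; lia
      _ = a ^ 4 * b * c ^ 3 := by ring
      _ ≤ N := pow_four_mul_le ha hb hc hab hbc h4' hc3.ge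
      _ ≤ 2 * N := by lia
  · have hc4 : c ^ 4 ≤ N := h.pow_four_le_of_even_factorization hc (by simp [hc2])
    calc (a * b * c) ^ 16 = (a ^ 4 * b * c ^ 2) ^ 4 * b ^ 12 * c ^ 8 := by ring
      _ ≤ N ^ 4 * c ^ 12 * c ^ 8 := by
          gcongr; exact pow_four_mul_le ha hb hc hab hbc h4' hc2.ge
      _ = N ^ 4 * (c ^ 4) ^ 5 := by ring
      _ ≤ N ^ 4 * N ^ 5 := by gcongr
      _ = N ^ 9 := by ring
      _ ≤ 2 ^ 10 * N ^ 9 := by lia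

lemma pow_sixteen_le_of_four_le_factorization (h : OddPerfect N) (ha : a ∈ N.primeFactors)
    (hb : b ∈ N.primeFactors) (hc : c ∈ N.primeFactors) (hab : a < b) (hbc : b < c)
    (ha2 : 2 ≤ N.factorization a) (hb4 : 4 ≤ N.factorization b) (hc1 : N.factorization c = 1) :
    (a * b * c) ^ 16 ≤ 2 ^ 10 * N ^ 9 := by
  refine pow_sixteen_le_of_pow_eighteen_le h.pos ?_
  calc (a * b * c) ^ 18 = a ^ 12 * b ^ 18 * c ^ 6 * a ^ 6 * (c ^ 3) ^ 4 := by ring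
    _ ≤ a ^ 12 * b ^ 18 * c ^ 6 * b ^ 6 * (6 * N) ^ 4 := by
        gcongr; exact h.cube_le_six_mul hc hc1
    _ = (a ^ 2 * b ^ 4 * c ^ 1) ^ 6 * (6 * N) ^ 4 := by ring
    _ ≤ N ^ 6 * (6 * N) ^ 4 := by
        gcongr; exact pow_mul_pow_mul_pow_le ha hb hc hab hbc ha2 hb4 hc1.ge
    _ = 1296 * N ^ 10 := by ring
    _ ≤ 2 ^ 11 * N ^ 10 := by gcongr; norm_num

lemma pow_sixteen_le_of_dvd_geom_sum_of_ne {q : ℕ} (h : OddPerfect N) (ha : a ∈ N.primeFactors)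
    (hb : b ∈ N.primeFactors) (hc : c ∈ N.primeFactors) (hq : q ∈ N.primeFactors) (hab : a < b)
    (hbc : b < c) (hqa : q ≠ a) (hqb : q ≠ b) (hqc : q ≠ c) (ha2 : 2 ≤ N.factorization a)
    (hb2 : 2 ≤ N.factorization b) (hcq : c ∣ ∑ i ∈ range (N.factorization q + 1), q ^ i) :
    (a * b * c) ^ 16 ≤ 2 ^ 10 * N ^ 9 := by
  refine pow_sixteen_le_of_sq_le h.pos ?_
  set l := N.factorization q
  have hcl : 2 * c ≤ 3 * q ^ l :=
    (Nat.mul_le_mul_left 2 (Nat.le_of_dvd (geom_sum_succ_pos q l) hcq)).trans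
      (mul_geom_sum_le (h.three_le_of_mem_primeFactors hq) l)
  have hdvd : a ^ 2 * b ^ 2 * c ^ 1 * q ^ l ∣ N := by
    refine Nat.Coprime.mul_dvd_of_dvd_of_dvd (.pow_right l ?_) (pow_mul_pow_mul_pow_dvd
      ha hb hc hab hbc ha2 hb2 (factorization_pos_of_mem_primeFactors hc)) (Nat.ordProj_dvd N q)
    exact (((coprime_of_mem_primeFactors ha hq hqa.symm).pow_left 2).mul_left
      ((coprime_of_mem_primeFactors hb hq hqb.symm).pow_left 2)).mul_left
      ((coprime_of_mem_primeFactors hc hq hqc.symm).pow_left 1)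
  calc (a * b * c) ^ 2 = a ^ 2 * b ^ 2 * c * c := by ring
    _ ≤ a ^ 2 * b ^ 2 * c * (2 * q ^ l) := by gcongr; lia
    _ = 2 * (a ^ 2 * b ^ 2 * c ^ 1 * q ^ l) := by ring
    _ ≤ 2 * N := by gcongr; exact Nat.le_of_dvd h.pos hdvd

lemma pow_sixteen_le_of_six_le_factorization (h : OddPerfect N) (ha : a ∈ N.primeFactors)
    (hb : b ∈ N.primeFactors) (hc : c ∈ N.primeFactors) (hab : a < b) (hbc : b < c)
    (ha6 : 6 ≤ N.factorization a) (hb2 : 2 ≤ N.factorization b) (hc1 : N.factorization c = 1)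
    (hbcN : b ^ 2 * c ^ 2 ≤ 2 * N) : (a * b * c) ^ 16 ≤ 2 ^ 10 * N ^ 9 := by
  refine pow_sixteen_le_of_pow_eighteen_le h.pos ?_
  calc (a * b * c) ^ 18 = (a ^ 6 * b ^ 2 * c ^ 1) ^ 3 * (b ^ 2 * c ^ 2) ^ 6 * c ^ 3 := by ring
    _ ≤ N ^ 3 * (2 * N) ^ 6 * (6 * N) := by
        gcongr
        · exact pow_mul_pow_mul_pow_le ha hb hc hab hbc ha6 hb2 hc1.ge
        · exact h.cube_le_six_mul hc hc1
    _ = 384 * N ^ 10 := by ring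
    _ ≤ 2 ^ 11 * N ^ 10 := by gcongr; norm_num

lemma sq_mul_sq_le_of_dvd_geom_sum (h : OddPerfect N) (ha : a ∈ N.primeFactors)
    (hb : b ∈ N.primeFactors) (hc : c ∈ N.primeFactors) (hab : a < b) (hbc : b < c)
    (hb2 : 2 ≤ N.factorization b)
    (hca : c ∣ ∑ i ∈ range (N.factorization a + 1), a ^ i) : b ^ 2 * c ^ 2 ≤ 2 * N := by
  set k := N.factorization a
  have hck : 2 * c ≤ 3 * a ^ k :=
    (Nat.mul_le_mul_left 2 (Nat.le_of_dvd (geom_sum_succ_pos a k) hca)).trans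
      (mul_geom_sum_le (h.three_le_of_mem_primeFactors ha) k)
  calc b ^ 2 * c ^ 2 = b ^ 2 * c * c := by ring
    _ ≤ b ^ 2 * c * (2 * a ^ k) := by gcongr; lia
    _ = 2 * (a ^ k * b ^ 2 * c ^ 1) := by ring
    _ ≤ 2 * N := by
        gcongr
        exact pow_mul_pow_mul_pow_le ha hb hc hab hbc le_rfl hb2
          (factorization_pos_of_mem_primeFactors hc)

lemma sq_mul_sq_le_of_dvd_geom_sum_three (h : OddPerfect N) (hb : b ∈ N.primeFactors)
    (hc : c ∈ N.primeFactors) (hb4 : 4 < b) (hbc : b < c) (hb2 : N.factorization b = 2)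
    (hc1 : N.factorization c = 1) (hcb : c ∣ ∑ i ∈ range 3, b ^ i) : b ^ 2 * c ^ 2 ≤ 2 * N := by
  simpa only [hb2, mul_comm] using h.sq_mul_pow_le_of_not_dvd_add_one hb hc hbc.ne hc1
    (not_dvd_add_one_of_dvd_geom_sum_three hb4 hbc hcb)

lemma pow_sixteen_le_of_dvd_geom_sum_snd (h : OddPerfect N) (ha : a ∈ N.primeFactors)
    (hb : b ∈ N.primeFactors) (hc : c ∈ N.primeFactors) (hab : a < b) (hbc : b < c)
    (ha4 : N.factorization a = 4) (hb2 : N.factorization b = 2) (hc1 : N.factorization c = 1)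
    (hb4 : 4 < b) (hcb : c ∣ ∑ i ∈ range 3, b ^ i) : (a * b * c) ^ 16 ≤ 2 ^ 10 * N ^ 9 := by
  have hbcN : b ^ 2 * c ^ 2 ≤ 2 * N :=
    h.sq_mul_sq_le_of_dvd_geom_sum_three hb hc hb4 hbc hb2 hc1 hcb
  have hor := h.mul_mul_pow_le_or_sq_mul_pow_mul_le ha hb hc hab.ne (hab.trans hbc).ne hbc.ne hc1
    (by rw [hb2]; nlinarith) (by rwa [hb2]) (not_dvd_add_one_of_dvd_geom_sum_three hb4 hbc hcb)
  rw [ha4, hb2] at hor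
  rcases hor with hle | hle
  · calc (a * b * c) ^ 16 = (c * b * a ^ (2 * 4)) ^ 2 * (b ^ 2 * c ^ 2) ^ 7 := by ring
      _ ≤ N ^ 2 * (2 * N) ^ 7 := by gcongr
      _ = 128 * N ^ 9 := by ring
      _ ≤ 2 ^ 10 * N ^ 9 := by gcongr; norm_num
  · refine pow_sixteen_le_of_pow_eighteen_le h.pos ?_
    calc (a * b * c) ^ 18
        = (c ^ 2 * b ^ 2 * a) ^ 6 * (a ^ 4 * b ^ 2 * c ^ 1) ^ 3 * c ^ 3 := by ring
      _ ≤ (2 * N) ^ 6 * N ^ 3 * (6 * N) := by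
          gcongr
          · exact pow_mul_pow_mul_pow_le ha hb hc hab hbc ha4.ge hb2.ge hc1.ge
          · exact h.cube_le_six_mul hc hc1
      _ = 384 * N ^ 10 := by ring
      _ ≤ 2 ^ 11 * N ^ 10 := by gcongr; norm_num

lemma pow_sixteen_le_of_four_mul_le (h : OddPerfect N) (ha : a ∈ N.primeFactors)
    (hb : b ∈ N.primeFactors) (hc : c ∈ N.primeFactors) (hab : a < b) (hbc : b < c)
    (ha4 : 4 ≤ N.factorization a) (hb2 : 2 ≤ N.factorization b) (hc1 : N.factorization c = 1)
    (hac : 4 * c ≤ 9 * a ^ 3) : (a * b * c) ^ 16 ≤ 2 ^ 10 * N ^ 9 := by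
  refine pow_sixteen_le_of_pow_eighteen_le h.pos ?_
  have hle : 4 ^ 6 * (a * b * c) ^ 18 ≤ 4 ^ 6 * (2 ^ 11 * N ^ 10) := by
    calc 4 ^ 6 * (a * b * c) ^ 18 = a ^ 18 * b ^ 18 * c ^ 12 * (4 * c) ^ 6 := by ring
      _ ≤ a ^ 18 * b ^ 18 * c ^ 12 * (9 * a ^ 3) ^ 6 := by gcongr
      _ = 9 ^ 6 * ((a ^ 4 * b ^ 2 * c ^ 1) ^ 9 * c ^ 3) := by ring
      _ ≤ 9 ^ 6 * (N ^ 9 * (6 * N)) := by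
          gcongr
          · exact pow_mul_pow_mul_pow_le ha hb hc hab hbc ha4 hb2 hc1.ge
          · exact h.cube_le_six_mul hc hc1
      _ = 9 ^ 6 * 6 * N ^ 10 := by ring
      _ ≤ 4 ^ 6 * 2 ^ 11 * N ^ 10 := Nat.mul_le_mul_right _ (by norm_num)
      _ = 4 ^ 6 * (2 ^ 11 * N ^ 10) := by ring
  exact Nat.le_of_mul_le_mul_left hle (by norm_num)

lemma pow_sixteen_le_of_dvd_geom_sum_fst (h : OddPerfect N) (ha : a ∈ N.primeFactors)
    (hb : b ∈ N.primeFactors) (hc : c ∈ N.primeFactors) (hab : a < b) (hbc : b < c)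
    (ha4 : N.factorization a = 4) (hb2 : N.factorization b = 2) (hc1 : N.factorization c = 1)
    (hca : c ∣ ∑ i ∈ range 5, a ^ i) : (a * b * c) ^ 16 ≤ 2 ^ 10 * N ^ 9 := by
  have ha3 := h.three_le_of_mem_primeFactors ha
  by_cases hac : a ∣ c + 1
  · exact h.pow_sixteen_le_of_four_mul_le ha hb hc hab hbc ha4.ge hb2.ge hc1
      (four_mul_le_of_dvd_geom_sum ha3 hac hca)
  have haN : c ^ 2 * a ^ 4 ≤ 2 * N := by
    simpa only [ha4] using
      h.sq_mul_pow_le_of_not_dvd_add_one ha hc (hab.trans hbc).ne hc1 hac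
  have h81 : 3 ^ 4 ≤ a ^ 4 := by gcongr
  have hor := h.mul_mul_pow_le_or_sq_mul_pow_mul_le hb ha hc hab.ne' hbc.ne (hab.trans hbc).ne hc1
    (by rw [ha4]; lia) (by rwa [ha4]) hac
  rw [ha4, hb2] at hor
  rcases hor with hle | hle
  · calc (a * b * c) ^ 16 = (c * a * b ^ (2 * 2)) ^ 4 * (c ^ 2 * a ^ 4) ^ 3 * (c ^ 3) ^ 2 := by ring
      _ ≤ N ^ 4 * (2 * N) ^ 3 * (6 * N) ^ 2 := by gcongr; exact h.cube_le_six_mul hc hc1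
      _ = 288 * N ^ 9 := by ring
      _ ≤ 2 ^ 10 * N ^ 9 := by gcongr; norm_num
  · have hca4 : c ≤ 2 * a ^ 4 := by
      have := Nat.le_of_dvd (geom_sum_succ_pos a 4) hca
      have := mul_geom_sum_le ha3 4
      lia
    calc (a * b * c) ^ 16 = a ^ 16 * b ^ 16 * c ^ 11 * c ^ 5 := by ring
      _ ≤ a ^ 16 * b ^ 16 * c ^ 11 * (2 * a ^ 4) ^ 5 := by gcongr
      _ = 2 ^ 5 * ((c ^ 2 * a ^ 4 * b) ^ 2 * (a ^ 4 * b ^ 2 * c ^ 1) ^ 7) := by ring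
      _ ≤ 2 ^ 5 * ((2 * N) ^ 2 * N ^ 7) := by
          gcongr; exact pow_mul_pow_mul_pow_le ha hb hc hab hbc ha4.ge hb2.ge hc1.ge
      _ = 128 * N ^ 9 := by ring
      _ ≤ 2 ^ 10 * N ^ 9 := by gcongr; norm_num

lemma pow_sixteen_le_of_factorization_eq_two (h : OddPerfect N) (ha : a ∈ N.primeFactors)
    (hb : b ∈ N.primeFactors) (hc : c ∈ N.primeFactors) (hab : a < b) (hbc : b < c)
    (ha4 : 4 ≤ N.factorization a) (hb2 : N.factorization b = 2) (hc1 : N.factorization c = 1) :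
    (a * b * c) ^ 16 ≤ 2 ^ 10 * N ^ 9 := by
  have hb4 : 4 < b := by
    have := h.three_le_of_mem_primeFactors ha
    have := h.odd_of_mem_primeFactors hb
    grind
  have ha46 : N.factorization a = 4 ∨ 6 ≤ N.factorization a := by
    have := h.even_factorization_of_odd_factorization ha hc (hab.trans hbc).ne (by simp [hc1])
    grind
  obtain ⟨q, hq, hqc, hcq⟩ := h.exists_dvd_geom_sum hc
  rcases eq_or_ne q a with rfl | hqa
  · rcases ha46 with ha4 | ha6
    · exact h.pow_sixteen_le_of_dvd_geom_sum_fst ha hb hc hab hbc ha4 hb2 hc1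
        (by simpa only [ha4] using hcq)
    · exact h.pow_sixteen_le_of_six_le_factorization ha hb hc hab hbc ha6 hb2.ge hc1
        (h.sq_mul_sq_le_of_dvd_geom_sum ha hb hc hab hbc hb2.ge hcq)
  rcases eq_or_ne q b with rfl | hqb
  · rw [hb2] at hcq
    rcases ha46 with ha4 | ha6
    · exact h.pow_sixteen_le_of_dvd_geom_sum_snd ha hb hc hab hbc ha4 hb2 hc1 hb4 hcq
    · exact h.pow_sixteen_le_of_six_le_factorization ha hb hc hab hbc ha6 hb2.ge hc1
        (h.sq_mul_sq_le_of_dvd_geom_sum_three hb hc hb4 hbc hb2 hc1 hcq)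
  · exact h.pow_sixteen_le_of_dvd_geom_sum_of_ne ha hb hc hq hab hbc hqa hqb hqc (by lia) hb2.ge hcq

theorem pow_sixteen_le (h : OddPerfect N) (ha : a ∈ N.primeFactors)
    (hb : b ∈ N.primeFactors) (hc : c ∈ N.primeFactors) (hab : a < b) (hbc : b < c)
    (h4 : 4 ≤ N.factorization a ∨ 4 ≤ N.factorization b ∨ 4 ≤ N.factorization c) :
    (a * b * c) ^ 16 ≤ 2 ^ 10 * N ^ 9 := by
  have hfa := factorization_pos_of_mem_primeFactors ha
  have hfb := factorization_pos_of_mem_primeFactors hb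
  have hfc := factorization_pos_of_mem_primeFactors hc
  obtain hc2 | hc1 : 2 ≤ N.factorization c ∨ N.factorization c = 1 := by lia
  · exact h.pow_sixteen_le_of_two_le_factorization ha hb hc hab hbc h4 hc2
  have hc_odd : Odd (N.factorization c) := by simp [hc1]
  have hea := h.even_factorization_of_odd_factorization ha hc (hab.trans hbc).ne hc_odd
  have heb := h.even_factorization_of_odd_factorization hb hc hbc.ne hc_odd
  obtain hb4 | hb2 : 4 ≤ N.factorization b ∨ N.factorization b = 2 := by grind
  · exact h.pow_sixteen_le_of_four_le_factorization ha hb hc hab hbc (by grind) hb4 hc1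
  · exact h.pow_sixteen_le_of_factorization_eq_two ha hb hc hab hbc (by lia) hb2 hc1

end OddPerfect

lemma le_rpow_mul_rpow_of_pow_sixteen_le {x N : ℝ} (hN : 0 ≤ N) (h : x ^ 16 ≤ 2 ^ 10 * N ^ 9) :
    x ≤ 2 ^ (5 / 8 : ℝ) * N ^ (9 / 16 : ℝ) := by
  refine le_of_pow_le_pow_left₀ (n := 16) (by lia) (by positivity) (h.trans_eq ?_)
  have exp_two : (5 / 8 : ℝ) * (16 : ℕ) = (10 : ℕ) := by norm_num
  have exp_N : (9 / 16 : ℝ) * (16 : ℕ) = (9 : ℕ) := by norm_num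
  rw [mul_pow, ← Real.rpow_mul_natCast two_pos.le, ← Real.rpow_mul_natCast hN, exp_two, exp_N,
    Real.rpow_natCast, Real.rpow_natCast]

lemma two_rpow_lt_two_rpow_mul_three_rpow :
    (2 : ℝ) ^ (5 / 8 : ℝ) < 2 ^ (7 / 20 : ℝ) * 3 ^ (13 / 60 : ℝ) := by
  refine lt_of_pow_lt_pow_left₀ 120 (by positivity) ?_
  rw [mul_pow, ← Real.rpow_mul_natCast two_pos.le, ← Real.rpow_mul_natCast two_pos.le,
    ← Real.rpow_mul_natCast three_pos.le]
  norm_num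

lemma rpow_mul_rpow_lt_rpow_mul_rpow_mul_rpow {x : ℝ} (hx : 1 ≤ x) :
    (2 : ℝ) ^ (5 / 8 : ℝ) * x ^ (9 / 16 : ℝ) <
      2 ^ (7 / 20 : ℝ) * 3 ^ (13 / 60 : ℝ) * x ^ (17 / 30 : ℝ) :=
  mul_lt_mul two_rpow_lt_two_rpow_mul_three_rpow
    (Real.rpow_le_rpow_of_exponent_le hx (by norm_num)) (by positivity) (by positivity)

lemma lt_of_card_filter_lt {α : Type*} [LinearOrder α] {s : Finset α} {x y : α}
    (h : #{z ∈ s | y < z} < #{z ∈ s | x < z}) : x < y := by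
  by_contra! hyx
  exact h.not_ge (card_le_card (monotone_filter_right s fun z _ hz => hyx.trans_lt hz))

theorem stmt_13_general {N a b c : ℕ} (hodd : Odd N) (hperf : Nat.Perfect N)
    (ha : a ∈ N.primeFactors) (hb : b ∈ N.primeFactors) (hc : c ∈ N.primeFactors)
    (hab : a < b) (hbc : b < c) (h4 : a ^ 4 ∣ N ∨ b ^ 4 ∣ N ∨ c ^ 4 ∣ N) :
    (a * b * c : ℝ) ≤ (2 : ℝ) ^ ((5 : ℝ) / 8) * (N : ℝ) ^ ((9 : ℝ) / 16) := by
  have four_le {p : ℕ} (hp : p ∈ N.primeFactors) : p ^ 4 ∣ N → 4 ≤ N.factorization p :=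
    ((Nat.prime_of_mem_primeFactors hp).pow_dvd_iff_le_factorization hodd.pos.ne').1
  have hle : (a * b * c) ^ 16 ≤ 2 ^ 10 * N ^ 9 :=
    OddPerfect.pow_sixteen_le ⟨hodd, hperf⟩ ha hb hc hab hbc
      (h4.imp (four_le ha) (Or.imp (four_le hb) (four_le hc)))
  exact le_rpow_mul_rpow_of_pow_sixteen_le N.cast_nonneg (mod_cast hle)

/-- Let N be an odd perfect number with at least three distinct
prime divisors, with c, b, a its largest, second largest and third largest
prime divisors. If p⁴ ∣ N for some prime p ∈ {a, b, c}, then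
abc < 2^(7/20) · 3^(13/60) · N^(17/30). -/
theorem stmt_13 (N : ℕ) (hodd : Odd N) (hperf : Nat.Perfect N)
    (hk : 3 ≤ N.primeFactors.card)
    (a b c : ℕ)
    (ha : a ∈ N.primeFactors) (hb : b ∈ N.primeFactors) (hc : c ∈ N.primeFactors)
    (ha2 : (N.primeFactors.filter (fun q => a < q)).card = 2)
    (hb1 : (N.primeFactors.filter (fun q => b < q)).card = 1)
    (hc0 : (N.primeFactors.filter (fun q => c < q)).card = 0)
    (h4 : a ^ 4 ∣ N ∨ b ^ 4 ∣ N ∨ c ^ 4 ∣ N) :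
    (a * b * c : ℝ) < (2 : ℝ) ^ ((7 : ℝ) / 20) * (3 : ℝ) ^ ((13 : ℝ) / 60) *
      (N : ℝ) ^ ((17 : ℝ) / 30) :=
  (stmt_13_general hodd hperf ha hb hc (lt_of_card_filter_lt (s := N.primeFactors) (by lia))
    (lt_of_card_filter_lt (s := N.primeFactors) (by lia)) h4).trans_lt
    (rpow_mul_rpow_lt_rpow_mul_rpow_mul_rpow (mod_cast hodd.pos))
end

section
/- Let N be an odd perfect number with at least three distinct prime divisors, and let a, b, c denote respectively its third largest, second largest, and largest prime divisors. If a² ∥ N, b² ∥ N, and c² ∥ N, then abc < 2^(1/3) · 3^(1/18) · N^(17/36). -/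
/-!
For a prime `p` one has `σ(p²) = p² + p + 1`, which is prime to `p`. Write `N = a²b²c²M` with
`a < b < c`, so that `σ(N) = kN` reads
`(a² + a + 1)(b² + b + 1)(c² + c + 1) σ(M) = a²b²c² · kM`; in particular `σ(M) < kM`.

If `c ∤ σ(M)`, then `c²` divides `(a² + a + 1)(b² + b + 1)`. Neither factor is large enough to be a
multiple of `c²`, so `a` and `b` are the two roots of `x² + x + 1` modulo `c`, and `c = a + b + 1`.
In that case `b² ∤ (a² + a + 1)(c² + c + 1)`: if `b` divides both factors then `b ∣ 2(a + 1)`, which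
contradicts `b ∣ a(a + 1) + 1`, and if `b² ∣ c² + c + 1` then size and parity force
`c² + c + 1 = 3b²`, so that `c ∣ 13`, which is absurd because `183 = 3b²` has no solution. Hence
`b ∣ σ(M)`. Either way `b < kM` and `c < 2kM`, so `abc < 2(kM)³`, which is to say
`(abc)⁷ < 2(kN)³`.
-/

lemma sq_dvd_or_sq_dvd_or_dvd_and_dvd {p x y : ℕ} (hp : p.Prime) (h : p ^ 2 ∣ x * y) :
    p ^ 2 ∣ x ∨ p ^ 2 ∣ y ∨ p ∣ x ∧ p ∣ y := by
  by_cases hx : p ∣ x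
  · by_cases hy : p ∣ y
    · exact .inr (.inr ⟨hx, hy⟩)
    · exact .inl (hp.prime.pow_dvd_of_dvd_mul_right 2 hy h)
  · exact .inr (.inl (hp.prime.pow_dvd_of_dvd_mul_left 2 hx h))

lemma lt_of_card_filter_lt_lt_card_filter_lt {α : Type*} [LinearOrder α] {s : Finset α} {a b : α}
    (h : (s.filter (b < ·)).card < (s.filter (a < ·)).card) : a < b := by
  contrapose! h
  exact Finset.card_le_card (Finset.monotone_filter_right s fun _ _ hq => h.trans_lt hq)

lemma mul_mul_pow_dvd {a b c k n : ℕ} (ha : a.Prime) (hb : b.Prime) (hc : c.Prime) (hab : a ≠ b)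
    (hac : a ≠ c) (hbc : b ≠ c) (han : a ^ k ∣ n) (hbn : b ^ k ∣ n) (hcn : c ^ k ∣ n) :
    (a * b * c) ^ k ∣ n := by
  have hab' : a.Coprime b := (Nat.coprime_primes ha hb).2 hab
  have habc : (a * b).Coprime c :=
    ((Nat.coprime_primes ha hc).2 hac).mul_left ((Nat.coprime_primes hb hc).2 hbc)
  rw [mul_pow]
  refine (habc.pow k k).mul_dvd_of_dvd_of_dvd ?_ hcn
  rw [mul_pow]
  exact (hab'.pow k k).mul_dvd_of_dvd_of_dvd han hbn

section DivisorsOfSqAddSelfAddOne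

variable {a b c p s x : ℕ}

lemma not_dvd_sq_add_self_add_one_self (hp : p.Prime) : ¬ p ∣ p ^ 2 + p + 1 := by
  rw [Nat.dvd_add_right ⟨p + 1, by ring⟩]
  exact hp.not_dvd_one

lemma not_sq_dvd_sq_add_self_add_one_of_lt (hx : 0 < x) (hxp : x < p) :
    ¬ p ^ 2 ∣ x ^ 2 + x + 1 :=
  Nat.not_dvd_of_pos_of_lt (by positivity) (by nlinarith)

lemma dvd_or_sq_dvd_of_sq_dvd_mul (hp : p.Prime) (h : p ^ 2 ∣ (p ^ 2 + p + 1) * (x * s)) :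
    p ∣ s ∨ p ^ 2 ∣ x :=
  or_iff_not_imp_left.2 fun hs => hp.prime.pow_dvd_of_dvd_mul_right 2 hs
    (hp.prime.pow_dvd_of_dvd_mul_left 2 (not_dvd_sq_add_self_add_one_self hp) h)

lemma eq_add_add_one_of_dvd_sq_add_self_add_one (hc : c.Prime) (hab : a < b) (hbc : b < c)
    (hca : c ∣ a ^ 2 + a + 1) (hcb : c ∣ b ^ 2 + b + 1) : c = a + b + 1 := by
  obtain ⟨d, rfl⟩ := Nat.exists_eq_add_of_lt hab
  have hdiff : (a + d + 1) ^ 2 + (a + d + 1) + 1 =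
      (a ^ 2 + a + 1) + (d + 1) * (a + (a + d + 1) + 1) := by ring
  have hmul : c ∣ (d + 1) * (a + (a + d + 1) + 1) := by
    rwa [hdiff, Nat.dvd_add_right hca] at hcb
  have hsum : c ∣ a + (a + d + 1) + 1 :=
    (hc.dvd_mul.1 hmul).resolve_left (Nat.not_dvd_of_pos_of_lt (by omega) (by omega))
  exact (Nat.eq_of_dvd_of_lt_two_mul (by omega) hsum (by omega)).symm

lemma sq_add_self_add_one_ne_three_mul_sq (hc : c.Prime) (hcb : c ∣ b ^ 2 + b + 1) :
    c ^ 2 + c + 1 ≠ 3 * b ^ 2 := by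
  intro h
  have hroot : (b : ZMod c) ^ 2 + b + 1 = 0 := by
    exact_mod_cast (ZMod.natCast_eq_zero_iff _ c).2 hcb
  have hthree_sq : 3 * (b : ZMod c) ^ 2 = 1 := by
    simpa using (congrArg (Nat.cast : ℕ → ZMod c) h).symm
  have hthree : 3 * (b : ZMod c) = -4 := by linear_combination 3 * hroot - hthree_sq
  have hthirteen : ((13 : ℕ) : ZMod c) = 0 := by
    push_cast
    linear_combination 3 * hthree_sq - (3 * (b : ZMod c) - 4) * hthree
  obtain rfl := (Nat.prime_dvd_prime_iff_eq hc (by norm_num)).1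
    ((ZMod.natCast_eq_zero_iff _ c).1 hthirteen)
  have hsquare : IsSquare 61 := ⟨b, by linarith⟩
  exact absurd hsquare (by norm_num)

lemma not_sq_dvd_sq_add_self_add_one_of_lt_two_mul (hc : c.Prime) (hbc : b < c)
    (hcb : c < 2 * b) (hdvd : c ∣ b ^ 2 + b + 1) : ¬ b ^ 2 ∣ c ^ 2 + c + 1 := by
  rintro ⟨k, hk⟩
  have hk_odd : Odd k := by
    have hodd : Odd (c ^ 2 + c + 1) := by
      rw [sq, ← Nat.mul_add_one]
      exact (Nat.even_mul_succ_self c).add_one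
    exact (Nat.odd_mul.1 (hk ▸ hodd)).2
  have hk_one : 1 < k := by
    by_contra! hk1
    nlinarith [Nat.mul_le_mul_left (b ^ 2) hk1]
  have hk_four : k < 4 := by
    by_contra! hk4
    nlinarith [Nat.mul_le_mul_left (b ^ 2) hk4]
  obtain rfl : k = 3 := by
    obtain ⟨r, rfl⟩ := hk_odd
    omega
  exact sq_add_self_add_one_ne_three_mul_sq hc hdvd (by rw [hk, mul_comm])

lemma not_dvd_add_add_one_sq_add_self_add_one (hp : p.Prime) (hp2 : p ≠ 2)
    (h : p ∣ x ^ 2 + x + 1) : ¬ p ∣ (x + p + 1) ^ 2 + (x + p + 1) + 1 := by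
  intro h'
  have hsplit : (x + p + 1) ^ 2 + (x + p + 1) + 1 =
      (x ^ 2 + x + 1 + p * (2 * x + p + 3)) + 2 * (x + 1) := by ring
  have htwo : p ∣ 2 * (x + 1) := by
    rwa [hsplit, Nat.dvd_add_right (h.add (dvd_mul_right _ _))] at h'
  have hx : p ∣ x + 1 := (hp.dvd_mul.1 htwo).resolve_left fun hd =>
    hp2 ((Nat.prime_dvd_prime_iff_eq hp Nat.prime_two).1 hd)
  rw [sq, ← Nat.mul_add_one, Nat.dvd_add_right (hx.mul_left x)] at h
  exact hp.not_dvd_one h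

lemma not_sq_dvd_mul_of_eq_add_add_one (hb : b.Prime) (hc : c.Prime) (ha : 0 < a) (hab : a < b)
    (hsum : c = a + b + 1) (hcb : c ∣ b ^ 2 + b + 1) :
    ¬ b ^ 2 ∣ (a ^ 2 + a + 1) * (c ^ 2 + c + 1) := by
  have hc_ne : c ≠ 2 * b := fun h => Nat.not_prime_mul (by norm_num) hb.ne_one (h ▸ hc)
  intro h
  rcases sq_dvd_or_sq_dvd_or_dvd_and_dvd hb h with h | h | ⟨hba, hbc⟩
  · exact not_sq_dvd_sq_add_self_add_one_of_lt ha hab h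
  · exact not_sq_dvd_sq_add_self_add_one_of_lt_two_mul hc (by omega) (by omega) hcb h
  · subst hsum
    exact not_dvd_add_add_one_sq_add_self_add_one hb (by omega) hba hbc

lemma dvd_or_eq_add_add_one_and_dvd (hb : b.Prime) (hc : c.Prime) (ha : 0 < a) (hab : a < b)
    (hbc : b < c)
    (hb_dvd : b ^ 2 ∣ (a ^ 2 + a + 1) * (b ^ 2 + b + 1) * (c ^ 2 + c + 1) * s)
    (hc_dvd : c ^ 2 ∣ (a ^ 2 + a + 1) * (b ^ 2 + b + 1) * (c ^ 2 + c + 1) * s) :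
    c ∣ s ∨ c = a + b + 1 ∧ b ∣ s := by
  refine or_iff_not_imp_left.2 fun hcs => ?_
  have hc_sq : c ^ 2 ∣ (a ^ 2 + a + 1) * (b ^ 2 + b + 1) :=
    (dvd_or_sq_dvd_of_sq_dvd_mul hc (by convert hc_dvd using 1; ring)).resolve_left hcs
  obtain ⟨hca, hcb⟩ : c ∣ a ^ 2 + a + 1 ∧ c ∣ b ^ 2 + b + 1 :=
    ((sq_dvd_or_sq_dvd_or_dvd_and_dvd hc hc_sq).resolve_left
      (not_sq_dvd_sq_add_self_add_one_of_lt ha (hab.trans hbc))).resolve_left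
      (not_sq_dvd_sq_add_self_add_one_of_lt hb.pos hbc)
  have hsum := eq_add_add_one_of_dvd_sq_add_self_add_one hc hab hbc hca hcb
  refine ⟨hsum, (dvd_or_sq_dvd_of_sq_dvd_mul hb ?_).resolve_right
    (not_sq_dvd_mul_of_eq_add_add_one hb hc ha hab hsum hcb)⟩
  convert hb_dvd using 1
  ring

end DivisorsOfSqAddSelfAddOne

lemma lt_of_mul_eq_mul_mul_sq_mul {a b c s t : ℕ} (ha : 0 < a) (hb : 0 < b) (hc : 0 < c)
    (hs : 0 < s)
    (h : (a ^ 2 + a + 1) * (b ^ 2 + b + 1) * (c ^ 2 + c + 1) * s = (a * b * c) ^ 2 * t) :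
    s < t := by
  refine lt_of_mul_lt_mul_left (a := (a * b * c) ^ 2) ?_ (Nat.zero_le _)
  rw [← h, mul_pow, mul_pow]
  gcongr <;> omega

lemma mul_mul_lt_two_mul_pow_three {a b c s t : ℕ} (hb : b.Prime) (hc : c.Prime) (ha : 0 < a)
    (hab : a < b) (hbc : b < c) (hs : 0 < s)
    (h : (a ^ 2 + a + 1) * (b ^ 2 + b + 1) * (c ^ 2 + c + 1) * s = (a * b * c) ^ 2 * t) :
    a * b * c < 2 * t ^ 3 := by
  have hst : s < t := lt_of_mul_eq_mul_mul_sq_mul ha hb.pos hc.pos hs h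
  obtain ⟨hbt, hct⟩ : b < t ∧ c < 2 * t := by
    have hdvd := dvd_or_eq_add_add_one_and_dvd (s := s) hb hc ha hab hbc
      (h ▸ ⟨a ^ 2 * c ^ 2 * t, by ring⟩) (h ▸ ⟨a ^ 2 * b ^ 2 * t, by ring⟩)
    rcases hdvd with hcs | ⟨hsum, hbs⟩
    · have := Nat.le_of_dvd hs hcs
      omega
    · have := Nat.le_of_dvd hs hbs
      omega
  have hat : a < t := hab.trans hbt
  calc a * b * c < t * t * (2 * t) := by gcongr
    _ = 2 * t ^ 3 := by ring

section Sigma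

open scoped ArithmeticFunction.sigma

variable {a b c k m N p : ℕ}

lemma sigma_one_prime_sq_mul (hp : p.Prime) (hm : ¬ p ∣ m) :
    σ 1 (p ^ 2 * m) = (p ^ 2 + p + 1) * σ 1 m := by
  have hcoprime : (p ^ 2).Coprime m := (hp.coprime_iff_not_dvd.2 hm).pow_left 2
  rw [ArithmeticFunction.isMultiplicative_sigma.map_mul_of_coprime hcoprime,
    ArithmeticFunction.sigma_one_apply_prime_pow hp]
  simp only [Finset.sum_range_succ, Finset.sum_range_zero]
  ring

lemma sigma_one_mul_mul_sq_mul (ha : a.Prime) (hb : b.Prime) (hc : c.Prime)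
    (haN : ¬ a ^ 3 ∣ (a * b * c) ^ 2 * m) (hbN : ¬ b ^ 3 ∣ (a * b * c) ^ 2 * m)
    (hcN : ¬ c ^ 3 ∣ (a * b * c) ^ 2 * m) :
    σ 1 ((a * b * c) ^ 2 * m) =
      (a ^ 2 + a + 1) * (b ^ 2 + b + 1) * (c ^ 2 + c + 1) * σ 1 m := by
  have not_dvd {p x : ℕ} (hpN : ¬ p ^ 3 ∣ (a * b * c) ^ 2 * m)
      (hx : p ^ 2 * x ∣ (a * b * c) ^ 2 * m) : ¬ p ∣ x :=
    fun hpx => hpN ((mul_dvd_mul_left (p ^ 2) hpx).trans hx)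
  calc σ 1 ((a * b * c) ^ 2 * m) = σ 1 (a ^ 2 * (b ^ 2 * (c ^ 2 * m))) := by
        simp only [mul_pow, mul_assoc]
    _ = (a ^ 2 + a + 1) * ((b ^ 2 + b + 1) * ((c ^ 2 + c + 1) * σ 1 m)) := by
        rw [sigma_one_prime_sq_mul ha (not_dvd haN ⟨1, by ring⟩),
          sigma_one_prime_sq_mul hb (not_dvd hbN ⟨a ^ 2, by ring⟩),
          sigma_one_prime_sq_mul hc (not_dvd hcN ⟨a ^ 2 * b ^ 2, by ring⟩)]
    _ = (a ^ 2 + a + 1) * (b ^ 2 + b + 1) * (c ^ 2 + c + 1) * σ 1 m := by ring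

theorem mul_mul_pow_seven_lt_of_sigma_one_eq_mul (hσ : σ 1 N = k * N)
    (ha : a.Prime) (hb : b.Prime) (hc : c.Prime) (hab : a < b) (hbc : b < c)
    (haN : a ^ 2 ∣ N ∧ ¬ a ^ 3 ∣ N) (hbN : b ^ 2 ∣ N ∧ ¬ b ^ 3 ∣ N)
    (hcN : c ^ 2 ∣ N ∧ ¬ c ^ 3 ∣ N) : (a * b * c) ^ 7 < 2 * (k * N) ^ 3 := by
  obtain ⟨M, rfl⟩ := mul_mul_pow_dvd ha hb hc hab.ne (hab.trans hbc).ne hbc.ne haN.1 hbN.1 hcN.1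
  rw [sigma_one_mul_mul_sq_mul ha hb hc haN.2 hbN.2 hcN.2] at hσ
  have hM : 0 < M := by
    refine Nat.pos_of_ne_zero ?_
    rintro rfl
    exact haN.2 (dvd_zero _)
  have hlt : a * b * c < 2 * (k * M) ^ 3 :=
    mul_mul_lt_two_mul_pow_three hb hc ha.pos hab hbc (ArithmeticFunction.sigma_pos_iff.2 hM)
      (by rw [hσ]; ring)
  have hpos : 0 < a * b * c := Nat.mul_pos (Nat.mul_pos ha.pos hb.pos) hc.pos
  calc (a * b * c) ^ 7 = (a * b * c) ^ 6 * (a * b * c) := pow_succ _ _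
    _ < (a * b * c) ^ 6 * (2 * (k * M) ^ 3) := by gcongr
    _ = 2 * (k * ((a * b * c) ^ 2 * M)) ^ 3 := by ring

end Sigma

lemma lt_two_rpow_mul_three_rpow_mul_rpow_of_pow_lt {x y : ℝ} (hy : 0 ≤ y)
    (h : x ^ 36 < 2 ^ 12 * 3 ^ 2 * y ^ 17) :
    x < (2 : ℝ) ^ ((1 : ℝ) / 3) * (3 : ℝ) ^ ((1 : ℝ) / 18) * y ^ ((17 : ℝ) / 36) := by
  refine lt_of_pow_lt_pow_left₀ 36 (by positivity) (h.trans_eq ?_)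
  rw [mul_pow, mul_pow, ← Real.rpow_mul_natCast (by norm_num),
    ← Real.rpow_mul_natCast (by norm_num), ← Real.rpow_mul_natCast hy,
    ← Real.rpow_natCast 2 12, ← Real.rpow_natCast 3 2, ← Real.rpow_natCast y 17]
  norm_num

lemma pow_lt_of_sq_le_of_pow_seven_lt {x n : ℕ} (hx : 0 < x) (hsq : x ^ 2 ≤ n)
    (h : x ^ 7 < 2 * (2 * n) ^ 3) : x ^ 36 < 2 ^ 12 * 3 ^ 2 * n ^ 17 := by
  have hn : 0 < n := (pow_pos hx 2).trans_le hsq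
  calc x ^ 36 ≤ x ^ 37 := Nat.pow_le_pow_right hx (by norm_num)
    _ = (x ^ 7) ^ 3 * (x ^ 2) ^ 8 := by ring
    _ ≤ (x ^ 7) ^ 3 * n ^ 8 := by gcongr
    _ < (2 * (2 * n) ^ 3) ^ 3 * n ^ 8 := by gcongr
    _ = 2 ^ 12 * n ^ 17 := by ring
    _ ≤ 2 ^ 12 * 3 ^ 2 * n ^ 17 := by gcongr; norm_num

theorem stmt_14_general {N a b c : ℕ} (hperf : Nat.Perfect N)
    (ha : a.Prime) (hb : b.Prime) (hc : c.Prime) (hab : a < b) (hbc : b < c)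
    (haN : a ^ 2 ∣ N ∧ ¬ a ^ 3 ∣ N) (hbN : b ^ 2 ∣ N ∧ ¬ b ^ 3 ∣ N)
    (hcN : c ^ 2 ∣ N ∧ ¬ c ^ 3 ∣ N) :
    (a * b * c : ℝ) < (2 : ℝ) ^ ((1 : ℝ) / 3) * (3 : ℝ) ^ ((1 : ℝ) / 18) *
      (N : ℝ) ^ ((17 : ℝ) / 36) := by
  have hσ : ArithmeticFunction.sigma 1 N = 2 * N := by
    rw [ArithmeticFunction.sigma_one_apply]
    exact (Nat.perfect_iff_sum_divisors_eq_two_mul hperf.2).1 hperf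
  have hseven : (a * b * c) ^ 7 < 2 * (2 * N) ^ 3 :=
    mul_mul_pow_seven_lt_of_sigma_one_eq_mul hσ ha hb hc hab hbc haN hbN hcN
  have hsq : (a * b * c) ^ 2 ≤ N := Nat.le_of_dvd hperf.2
    (mul_mul_pow_dvd ha hb hc hab.ne (hab.trans hbc).ne hbc.ne haN.1 hbN.1 hcN.1)
  have hpos : 0 < a * b * c := Nat.mul_pos (Nat.mul_pos ha.pos hb.pos) hc.pos
  exact lt_two_rpow_mul_three_rpow_mul_rpow_of_pow_lt N.cast_nonneg
    (mod_cast pow_lt_of_sq_le_of_pow_seven_lt hpos hsq hseven)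

/-- Let N be an odd perfect number with at least three distinct
prime divisors, with c, b, a its largest, second largest and third largest
prime divisors. If a² ∥ N, b² ∥ N, and c² ∥ N, then
abc < 2^(1/3) · 3^(1/18) · N^(17/36). -/
theorem stmt_14 (N : ℕ) (hodd : Odd N) (hperf : Nat.Perfect N)
    (hk : 3 ≤ N.primeFactors.card)
    (a b c : ℕ)
    (ha : a ∈ N.primeFactors) (hb : b ∈ N.primeFactors) (hc : c ∈ N.primeFactors)
    (ha2 : (N.primeFactors.filter (fun q => a < q)).card = 2)
    (hb1 : (N.primeFactors.filter (fun q => b < q)).card = 1)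
    (hc0 : (N.primeFactors.filter (fun q => c < q)).card = 0)
    (haN : a ^ 2 ∣ N ∧ ¬ a ^ 3 ∣ N)
    (hbN : b ^ 2 ∣ N ∧ ¬ b ^ 3 ∣ N)
    (hcN : c ^ 2 ∣ N ∧ ¬ c ^ 3 ∣ N) :
    (a * b * c : ℝ) < (2 : ℝ) ^ ((1 : ℝ) / 3) * (3 : ℝ) ^ ((1 : ℝ) / 18) *
      (N : ℝ) ^ ((17 : ℝ) / 36) := by
  exact stmt_14_general hperf (Nat.prime_of_mem_primeFactors ha) (Nat.prime_of_mem_primeFactors hb)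
    (Nat.prime_of_mem_primeFactors hc)
    (lt_of_card_filter_lt_lt_card_filter_lt (by rw [ha2, hb1]; norm_num))
    (lt_of_card_filter_lt_lt_card_filter_lt (by rw [hb1, hc0]; norm_num)) haN hbN hcN
end

section
/- Let N be an odd perfect number with at least three distinct prime divisors, and let a, b, c denote respectively its third largest, second largest, and largest prime divisors. If a ∥ N, b² ∥ N, and c² ∥ N, then a < (2N)^(1/7), i.e., a^7 < 2N. -/
/-!
Write `N = a b² c² m`, so that `σ(N) = (a + 1)(b² + b + 1)(c² + c + 1) σ(m)`. Since `N` is perfect,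
`b²` and `c²` divide `σ(N) = 2N`. As `b` is coprime to `b² + b + 1` and, unless `a = 2` and `b = 3`,
also to `a + 1`, it follows that `b² ∣ (c² + c + 1) σ(m)`, and likewise `c² ∣ (b² + b + 1) σ(m)`.
If `c ∤ b² + b + 1`, then `c² ∣ σ(m)`. Otherwise let `b² + b + 1 = c k`, so that `k < b`; if `b²`
divided `c² + c + 1`, then `b²` would divide `k² + bk + k + 2b + 1`, hence by size be equal to it,
which is impossible modulo `9`; therefore both `b` and `c` divide `σ(m)`. Either way `bc ≤ σ(m)`, so
`a⁷ < a b³ c³ < σ(N)`.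
-/

section

open scoped ArithmeticFunction.sigma

theorem quadratic_ne_sq (x y : ℤ) : y ^ 2 + x * y + y + 2 * x + 1 ≠ x ^ 2 := by
  intro h
  -- Completing squares gives `(5 * y + 4) ^ 2 + 24 = 5 * (2 * x - y - 2) ^ 2`; modulo `3` both
  -- squares vanish, so `9` would divide `24`.
  have h9 := congrArg (Int.cast : ℤ → ZMod 9) h
  push_cast at h9
  have no_solution_mod_nine :
      ∀ x y : ZMod 9, y ^ 2 + x * y + y + 2 * x + 1 ≠ x ^ 2 := by decide
  exact no_solution_mod_nine _ _ h9

theorem not_sq_dvd_quadratic {b k : ℕ} (hb : 1 < b) (hkb : k < b) :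
    ¬ b ^ 2 ∣ k ^ 2 + b * k + k + 2 * b + 1 := by
  intro hdvd
  rcases (Nat.succ_le_of_lt hkb).eq_or_lt with rfl | hkb'
  · have hrem : k ^ 2 + (k + 1) * k + k + 2 * (k + 1) + 1 = (k + 1) ^ 2 * 2 + 1 := by ring
    have hone : (k + 1) ^ 2 ∣ 1 := (Nat.dvd_add_right ⟨2, rfl⟩).1 (hrem ▸ hdvd)
    nlinarith [Nat.dvd_one.1 hone]
  · have hlt : k ^ 2 + b * k + k + 2 * b + 1 < 2 * b ^ 2 := by
      obtain ⟨r, rfl⟩ := Nat.exists_eq_add_of_le hkb'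
      simp only [Nat.succ_eq_add_one]
      nlinarith
    have heq := Nat.eq_of_dvd_of_lt_two_mul (Nat.succ_ne_zero _) hdvd hlt
    exact quadratic_ne_sq b k (mod_cast heq)

theorem sq_dvd_quadratic_of_mul_eq {R : Type*} [CommRing R] {b c k : R}
    (hck : c * k = b ^ 2 + b + 1) (hdvd : b ^ 2 ∣ c ^ 2 + c + 1) :
    b ^ 2 ∣ k ^ 2 + b * k + k + 2 * b + 1 := by
  obtain ⟨j, hj⟩ := hdvd
  -- Multiply `c ^ 2 + c + 1` by `k ^ 2` and reduce modulo `b ^ 2`.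
  refine ⟨j * k ^ 2 - (b ^ 2 + 2 * b + 3 + k), ?_⟩
  linear_combination k ^ 2 * hj - (b ^ 2 + b + 1 + c * k + k) * hck

theorem lt_of_mul_eq_sq_add_self_add_one {b c k : ℕ} (hb : 1 < b) (hbc : b < c)
    (hck : c * k = b ^ 2 + b + 1) : k < b := by
  by_contra! hbk
  have hmul : (b + 1) * k ≤ c * k := Nat.mul_le_mul_right k hbc
  obtain rfl : k = b := by nlinarith
  have hone : k ∣ 1 :=
    (Nat.dvd_add_right ⟨k + 1, by ring⟩).1 (hck ▸ Nat.dvd_mul_left k c)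
  exact hb.ne' (Nat.dvd_one.1 hone)

theorem not_sq_dvd_of_dvd_sq_add_self_add_one {b c : ℕ} (hb : 1 < b) (hbc : b < c)
    (hc : c ∣ b ^ 2 + b + 1) : ¬ b ^ 2 ∣ c ^ 2 + c + 1 := by
  obtain ⟨k, hk⟩ := hc
  intro hdvd
  refine not_sq_dvd_quadratic hb (lt_of_mul_eq_sq_add_self_add_one hb hbc hk.symm) ?_
  zify at hk hdvd ⊢
  exact sq_dvd_quadratic_of_mul_eq hk.symm hdvd

theorem dvd_of_pow_dvd_mul {M : Type*} [CommMonoidWithZero M] [IsCancelMulZero M] {p u v : M}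
    {n : ℕ} (hp : Prime p) (hu : ¬ p ^ n ∣ u) (h : p ^ n ∣ u * v) : p ∣ v := by
  by_contra hv
  exact hu (hp.pow_dvd_of_dvd_mul_right n hv h)

theorem mul_le_of_sq_dvd_mul {b c s : ℕ} (hb : b.Prime) (hc : c.Prime) (hbc : b < c)
    (hs : s ≠ 0) (hbs : b ^ 2 ∣ (c ^ 2 + c + 1) * s) (hcs : c ^ 2 ∣ (b ^ 2 + b + 1) * s) :
    b * c ≤ s := by
  by_cases hcb : c ∣ b ^ 2 + b + 1
  · have hb_dvd : b ∣ s :=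
      dvd_of_pow_dvd_mul hb.prime (not_sq_dvd_of_dvd_sq_add_self_add_one hb.one_lt hbc hcb) hbs
    have hc_dvd : c ∣ s := by
      refine dvd_of_pow_dvd_mul hc.prime (Nat.not_dvd_of_pos_of_lt (by omega) ?_) hcs
      nlinarith [hb.pos]
    have hcop : b.Coprime c := (Nat.coprime_primes hb hc).2 hbc.ne
    exact Nat.le_of_dvd (Nat.pos_of_ne_zero hs) (hcop.mul_dvd_of_dvd_of_dvd hb_dvd hc_dvd)
  · have hsq : c ^ 2 ∣ s := hc.prime.pow_dvd_of_dvd_mul_left 2 hcb hcs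
    calc b * c ≤ c * c := Nat.mul_le_mul_right c hbc.le
      _ = c ^ 2 := (sq c).symm
      _ ≤ s := Nat.le_of_dvd (Nat.pos_of_ne_zero hs) hsq

theorem coprime_of_not_pow_succ_dvd_mul {p s u m : ℕ} (hp : p.Prime) (hu : p ^ s ∣ u)
    (h : ¬ p ^ (s + 1) ∣ u * m) : p.Coprime m :=
  hp.coprime_iff_not_dvd.2 fun hm => h (pow_succ p s ▸ mul_dvd_mul hu hm)

theorem sigma_one_prime {p : ℕ} (hp : p.Prime) : σ 1 p = p + 1 := by
  rw [ArithmeticFunction.sigma_one_apply, hp.sum_divisors, add_comm]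

theorem sigma_one_prime_sq {p : ℕ} (hp : p.Prime) : σ 1 (p ^ 2) = p ^ 2 + p + 1 := by
  rw [ArithmeticFunction.sigma_one_apply_prime_pow hp]
  simp only [Finset.sum_range_succ, Finset.sum_range_zero]
  ring

theorem exists_eq_mul_and_sigma_one_eq {N a b c : ℕ} (ha : a.Prime) (hb : b.Prime)
    (hc : c.Prime) (hab : a ≠ b) (hac : a ≠ c) (hbc : b ≠ c)
    (haN : a ∣ N ∧ ¬ a ^ 2 ∣ N) (hbN : b ^ 2 ∣ N ∧ ¬ b ^ 3 ∣ N)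
    (hcN : c ^ 2 ∣ N ∧ ¬ c ^ 3 ∣ N) :
    ∃ m, N = a * b ^ 2 * c ^ 2 * m ∧
      σ 1 N = (a + 1) * (b ^ 2 + b + 1) * (c ^ 2 + c + 1) * σ 1 m := by
  have hab2 : a.Coprime (b ^ 2) := ((Nat.coprime_primes ha hb).2 hab).pow_right 2
  have habc2 : (a * b ^ 2).Coprime (c ^ 2) :=
    (((Nat.coprime_primes ha hc).2 hac).pow_right 2).mul_left
      (((Nat.coprime_primes hb hc).2 hbc).pow 2 2)
  obtain ⟨m, rfl⟩ : a * b ^ 2 * c ^ 2 ∣ N :=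
    habc2.mul_dvd_of_dvd_of_dvd (hab2.mul_dvd_of_dvd_of_dvd haN.1 hbN.1) hcN.1
  have ham : a.Coprime m :=
    coprime_of_not_pow_succ_dvd_mul (s := 1) ha ⟨b ^ 2 * c ^ 2, by ring⟩ haN.2
  have hbm : b.Coprime m :=
    coprime_of_not_pow_succ_dvd_mul hb ⟨a * c ^ 2, by ring⟩ hbN.2
  have hcm : c.Coprime m :=
    coprime_of_not_pow_succ_dvd_mul hc (Nat.dvd_mul_left _ _) hcN.2
  have habcm : (a * b ^ 2 * c ^ 2).Coprime m :=
    (ham.mul_left (hbm.pow_left 2)).mul_left (hcm.pow_left 2)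
  have hσ : (σ 1).IsMultiplicative := ArithmeticFunction.isMultiplicative_sigma
  refine ⟨m, rfl, ?_⟩
  rw [hσ.map_mul_of_coprime habcm, hσ.map_mul_of_coprime habc2, hσ.map_mul_of_coprime hab2,
    sigma_one_prime ha, sigma_one_prime_sq hb, sigma_one_prime_sq hc]

theorem not_dvd_sq_add_self_add_one {p : ℕ} (hp : p ≠ 1) : ¬ p ∣ p ^ 2 + p + 1 := fun h =>
  hp (Nat.dvd_one.1 ((Nat.dvd_add_right ⟨p + 1, by ring⟩).1 h))

theorem sq_dvd_of_sq_dvd_mul_sq_add_self_add_one {p u v : ℕ} (hp : p.Prime) (hu : ¬ p ∣ u)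
    (h : p ^ 2 ∣ u * (p ^ 2 + p + 1) * v) : p ^ 2 ∣ v :=
  hp.prime.pow_dvd_of_dvd_mul_left 2
    (hp.prime.not_dvd_mul hu (not_dvd_sq_add_self_add_one hp.ne_one)) h

theorem mul_mul_pow_three_lt_sigma_one {N a b c : ℕ} (ha : a.Prime) (hb : b.Prime)
    (hc : c.Prime) (hbc : b < c) (hba : ¬ b ∣ a + 1) (hca : ¬ c ∣ a + 1) (hab : a ≠ b)
    (hac : a ≠ c) (haN : a ∣ N ∧ ¬ a ^ 2 ∣ N) (hbN : b ^ 2 ∣ N ∧ ¬ b ^ 3 ∣ N)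
    (hcN : c ^ 2 ∣ N ∧ ¬ c ^ 3 ∣ N) (hbσ : b ^ 2 ∣ σ 1 N) (hcσ : c ^ 2 ∣ σ 1 N) :
    a * (b * c) ^ 3 < σ 1 N := by
  obtain ⟨m, hNm, hσ⟩ := exists_eq_mul_and_sigma_one_eq ha hb hc hab hac hbc.ne haN hbN hcN
  have hm : m ≠ 0 := by
    rintro rfl
    exact haN.2 (hNm ▸ dvd_zero _)
  have hbs : b ^ 2 ∣ (c ^ 2 + c + 1) * σ 1 m :=
    sq_dvd_of_sq_dvd_mul_sq_add_self_add_one hb hba (by rwa [← mul_assoc, ← hσ])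
  have hcs : c ^ 2 ∣ (b ^ 2 + b + 1) * σ 1 m :=
    sq_dvd_of_sq_dvd_mul_sq_add_self_add_one hc hca (by convert hcσ using 1; rw [hσ]; ring)
  have hs : b * c ≤ σ 1 m :=
    mul_le_of_sq_dvd_mul hb hc hbc (ArithmeticFunction.sigma_pos 1 m hm).ne' hbs hcs
  have hb0 := hb.pos
  have hc0 := hc.pos
  calc a * (b * c) ^ 3 = a * b ^ 2 * c ^ 2 * (b * c) := by ring
    _ < (a + 1) * (b ^ 2 + b + 1) * (c ^ 2 + c + 1) * (b * c) := by gcongr <;> omega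
    _ ≤ (a + 1) * (b ^ 2 + b + 1) * (c ^ 2 + c + 1) * σ 1 m := by gcongr
    _ = σ 1 N := hσ.symm

theorem eq_two_and_eq_three_of_dvd_succ {a b : ℕ} (ha : a.Prime) (hb : b.Prime) (hab : a < b)
    (h : b ∣ a + 1) : a = 2 ∧ b = 3 := by
  obtain rfl : b = a + 1 := le_antisymm (Nat.le_of_dvd a.succ_pos h) hab
  rcases ha.eq_two_or_odd' with rfl | hodd
  · exact ⟨rfl, rfl⟩
  · have : a + 1 = 2 := hb.even_iff.1 hodd.add_one
    exact absurd ha.two_le (by omega)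

theorem stmt_15_general {N a b c : ℕ} (ha : a.Prime) (hb : b.Prime) (hc : c.Prime)
    (hab : a < b) (hbc : b < c) (haN : a ∣ N ∧ ¬ a ^ 2 ∣ N)
    (hbN : b ^ 2 ∣ N ∧ ¬ b ^ 3 ∣ N) (hcN : c ^ 2 ∣ N ∧ ¬ c ^ 3 ∣ N)
    (hbσ : b ^ 2 ∣ σ 1 N) (hcσ : c ^ 2 ∣ σ 1 N) : a ^ 7 < σ 1 N := by
  have hac := hab.trans hbc
  have hσ : 0 < σ 1 N := ArithmeticFunction.sigma_pos 1 N (by rintro rfl; exact haN.2 (dvd_zero _))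
  by_cases hba : b ∣ a + 1
  · obtain ⟨rfl, rfl⟩ := eq_two_and_eq_three_of_dvd_succ ha hb hab hba
    have hcop : (3 ^ 2).Coprime (c ^ 2) := ((Nat.coprime_primes hb hc).2 hbc.ne).pow 2 2
    calc 2 ^ 7 < 3 ^ 2 * 4 ^ 2 := by norm_num
      _ ≤ 3 ^ 2 * c ^ 2 := by gcongr; exact hbc
      _ ≤ σ 1 N := Nat.le_of_dvd hσ (hcop.mul_dvd_of_dvd_of_dvd hbσ hcσ)
  · have hca : ¬ c ∣ a + 1 := Nat.not_dvd_of_pos_of_lt a.succ_pos (by omega)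
    calc a ^ 7 = a * (a * a) ^ 3 := by ring
      _ ≤ a * (b * c) ^ 3 := by gcongr
      _ < σ 1 N := mul_mul_pow_three_lt_sigma_one ha hb hc hbc hba hca hab.ne hac.ne
          haN hbN hcN hbσ hcσ

theorem lt_of_card_filter_lt_card_filter {α : Type*} [LinearOrder α] {s : Finset α} {x y : α}
    (h : (s.filter (fun q => y < q)).card < (s.filter (fun q => x < q)).card) : x < y := by
  by_contra! hyx
  exact h.not_ge (Finset.card_le_card (Finset.monotone_filter_right s fun _ _ => hyx.trans_lt))

theorem sigma_one_eq_two_mul_of_perfect {n : ℕ} (h : n.Perfect) : σ 1 n = 2 * n := by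
  rw [ArithmeticFunction.sigma_one_apply, (Nat.perfect_iff_sum_divisors_eq_two_mul h.2).1 h]

end

/-- Let N be an odd perfect number with at least three distinct
prime divisors, with c, b, a its largest, second largest and third largest
prime divisors. If a ∥ N, b² ∥ N, and c² ∥ N, then a < (2N)^(1/7),
i.e., a^7 < 2N. -/
theorem stmt_15 (N : ℕ) (hodd : Odd N) (hperf : Nat.Perfect N)
    (hk : 3 ≤ N.primeFactors.card)
    (a b c : ℕ)
    (ha : a ∈ N.primeFactors) (hb : b ∈ N.primeFactors) (hc : c ∈ N.primeFactors)
    (ha2 : (N.primeFactors.filter (fun q => a < q)).card = 2)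
    (hb1 : (N.primeFactors.filter (fun q => b < q)).card = 1)
    (hc0 : (N.primeFactors.filter (fun q => c < q)).card = 0)
    (haN : a ∣ N ∧ ¬ a ^ 2 ∣ N)
    (hbN : b ^ 2 ∣ N ∧ ¬ b ^ 3 ∣ N)
    (hcN : c ^ 2 ∣ N ∧ ¬ c ^ 3 ∣ N) :
    a ^ 7 < 2 * N := by
  have hσ := sigma_one_eq_two_mul_of_perfect hperf
  have hdvd : N ∣ ArithmeticFunction.sigma 1 N := hσ ▸ Nat.dvd_mul_left N 2
  have hab : a < b := lt_of_card_filter_lt_card_filter (s := N.primeFactors) (by omega)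
  have hbc : b < c := lt_of_card_filter_lt_card_filter (s := N.primeFactors) (by omega)
  exact hσ ▸ stmt_15_general (Nat.prime_of_mem_primeFactors ha) (Nat.prime_of_mem_primeFactors hb)
    (Nat.prime_of_mem_primeFactors hc) hab hbc haN hbN hcN (hbN.1.trans hdvd) (hcN.1.trans hdvd)
end

section
/- Let (s_n) be the sequence defined by s_0 = s_1 = 1 and s_{n+2} · s_n = s_{n+1}² + 1 for all n ≥ 0. If x and y are positive integers with x ≤ y such that x divides y² + 1 and y divides x² + 1, then there exists n ≥ 0 with x = s_n and y = s_{n+1}. -/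
/-!
Vieta jumping. If `x < y` and each of `x`, `y` divides the square of the other plus one, put
`z = (x ^ 2 + 1) / y`. Then `z ≤ x`, and `z` is the inverse of `y` modulo `x`; since `-1` is its own
inverse, `y ^ 2 ≡ -1` gives `z ^ 2 ≡ -1` modulo `x`. So `(z, x)` is a smaller pair of the same kind,
and the descent stops only at `(1, 1)`. Read backwards, each step `(z, x) ↦ (x, (x ^ 2 + 1) / z)`
is the recurrence of the sequence.
-/

lemma eq_one_of_dvd_self_pow_add_one {x k : ℕ} (hk : k ≠ 0) (h : x ∣ x ^ k + 1) : x = 1 :=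
  Nat.dvd_one.mp ((Nat.dvd_add_right (dvd_pow_self x hk)).mp h)

lemma dvd_pow_add_one_of_mul_modEq_one {x y z k : ℕ} (hyz : y * z ≡ 1 [MOD x])
    (hy : x ∣ y ^ k + 1) : x ∣ z ^ k + 1 := by
  have hmod : (y ^ k + 1) * z ^ k ≡ z ^ k + 1 [MOD x] :=
    calc (y ^ k + 1) * z ^ k = z ^ k + (y * z) ^ k := by ring
      _ ≡ z ^ k + 1 ^ k [MOD x] := (hyz.pow k).add_left _
      _ = z ^ k + 1 := by rw [one_pow]
  exact (hmod.dvd_iff dvd_rfl).mp (hy.mul_right _)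

lemma le_of_mul_le_sq_add_one {x y z : ℕ} (hx : 0 < x) (hxy : x < y) (h : y * z ≤ x ^ 2 + 1) :
    z ≤ x := by
  by_contra! hxz
  have hsq : (x + 1) * (x + 1) ≤ y * z := Nat.mul_le_mul hxy hxz
  linarith

/-- The pairs of natural numbers each of which divides the square of the other plus one; these are
the pairs on which Vieta jumping operates. -/
def MutuallyDvdSqAddOne (x y : ℕ) : Prop :=
  x ∣ y ^ 2 + 1 ∧ y ∣ x ^ 2 + 1

namespace MutuallyDvdSqAddOne

variable {x y z : ℕ}

lemma pos_left (h : MutuallyDvdSqAddOne x y) : 0 < x :=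
  Nat.pos_of_dvd_of_pos h.1 (Nat.succ_pos _)

lemma of_mul_eq_sq_add_one (h : MutuallyDvdSqAddOne x y) (hyz : y * z = x ^ 2 + 1) :
    MutuallyDvdSqAddOne z x := by
  have hinv : y * z ≡ 1 [MOD x] := by
    rw [hyz]
    exact Nat.add_modEq_right_iff.mpr (dvd_pow_self x two_ne_zero)
  exact ⟨Dvd.intro_left y hyz, dvd_pow_add_one_of_mul_modEq_one hinv h.1⟩

theorem vieta_induction {P : ℕ → ℕ → Prop} (one_one : P 1 1)
    (jump : ∀ x y z, y * z = x ^ 2 + 1 → P z x → P x y)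
    (h : MutuallyDvdSqAddOne x y) (hxy : x ≤ y) : P x y := by
  induction y using Nat.strong_induction_on generalizing x with
  | _ y ih =>
    obtain rfl | hlt := hxy.eq_or_lt
    · obtain rfl := eq_one_of_dvd_self_pow_add_one two_ne_zero h.1
      exact one_one
    · obtain ⟨z, hz⟩ := h.2
      have hzx : z ≤ x := le_of_mul_le_sq_add_one h.pos_left hlt hz.ge
      exact jump x y z hz.symm (ih x hlt (h.of_mul_eq_sq_add_one hz.symm) hzx)

end MutuallyDvdSqAddOne

/-- Let (s_n) be the sequence with s_0 = s_1 = 1 and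
s_{n+2} · s_n = s_{n+1}² + 1 for all n ≥ 0. If x and y are positive integers
with x ≤ y, x ∣ y² + 1 and y ∣ x² + 1, then (x, y) is a pair of consecutive
terms of the sequence. -/
theorem stmt_19 (s : ℕ → ℕ) (h0 : s 0 = 1) (h1 : s 1 = 1)
    (hrec : ∀ n, s (n + 2) * s n = (s (n + 1)) ^ 2 + 1)
    (x y : ℕ) (hx : 0 < x) (hy : 0 < y) (hxy : x ≤ y)
    (hd1 : x ∣ y ^ 2 + 1) (hd2 : y ∣ x ^ 2 + 1) :
    ∃ n, x = s n ∧ y = s (n + 1) := by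
  have hpair : MutuallyDvdSqAddOne x y := ⟨hd1, hd2⟩
  refine hpair.vieta_induction (P := fun x y ↦ ∃ n, x = s n ∧ y = s (n + 1))
    ⟨0, h0.symm, h1.symm⟩ ?_ hxy
  rintro _ w _ hw ⟨n, rfl, rfl⟩
  have hne : s n ≠ 0 := right_ne_zero_of_mul (hw.trans_ne (Nat.succ_ne_zero _))
  exact ⟨n + 1, rfl, mul_right_cancel₀ hne (hw.trans (hrec n).symm)⟩
end
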